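/- arXiv:2203.13163 — 6 statements merged into one kernel-verified Lean document; each statement's English description precedes it below -/
import Mathlib

section
/- Let (x_n)_{n∈ℤ} be pairwise distinct points of ℝ³ with x_0 ≠ 0. Set δ_0 = |x_0| and, for p ≥ 1, δ_p = min{|x_j − x_k| : −p ≤ j, k ≤ p, j ≠ k}. Let b : ℤ × ℤ → ℂ be Hermitian (b_{mn} = conj(b_{nm})) and satisfy Σ_{n,m∈ℤ} |b_{nm}| < ∞ and Σ_{n,m∈ℤ} |b_{nm}|/δ_{|m|} < ∞. Put C⁰(m) = (1/4π)·Σ_{j∈ℤ} |b_{mj}| and C¹(m) = (1/4π)·Σ_{j∈ℤ} |b_{mj}|/δ_{|j|}. Then for every ζ ∈ ℂ with Im ζ ≥ 0 and all n, m ∈ ℤ, the double series u_{nm} = Σ_{n'∈ℤ} Σ_{m'∈ℤ, m'≠n'} b_{nn'} · g(ζ; x_{n'} − x_{m'}) · b_{m'm} converges absolutely, |u_{nm}| ≤ 4π·[C¹(n)·C⁰(m) + C⁰(n)·C¹(m)], and Σ_{n,m∈ℤ} |u_{nm}|² < ∞; in particular the matrix (u_{nm}) defines a Hilbert–Schmidt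 operator on ℓ²(ℤ). -/
open MeasureTheory Complex Real

/-- The Green kernel `g(ζ; v) = e^{iζ|v|}/(4π|v|)` for a vector `v ∈ ℝ³`. -/
noncomputable def greenK (ζ : ℂ) (v : EuclideanSpace ℝ (Fin 3)) : ℂ :=
  Complex.exp (Complex.I * ζ * (‖v‖ : ℝ)) / ((4 * Real.pi * ‖v‖ : ℝ) : ℂ)

/-- The matrix entry `u_{nm} = Σ_{n'} Σ_{m' ≠ n'} b_{nn'} g(ζ; x_{n'} - x_{m'}) b_{m'm}`
(as a sum over pairs `p = (n', m')` with the diagonal `m' = n'` excluded). -/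
noncomputable def uMat (ζ : ℂ) (x : ℤ → EuclideanSpace ℝ (Fin 3)) (b : ℤ → ℤ → ℂ)
    (n m : ℤ) : ℂ :=
  ∑' p : ℤ × ℤ, if p.2 = p.1 then 0 else b n p.1 * greenK ζ (x p.1 - x p.2) * b p.2 m

/-- Under the summability assumptions on the Hermitian matrix `b` (weighted
by the separation quantities `δ_p`), for every `ζ` with `Im ζ ≥ 0` the double series defining
`u_{nm}` converges absolutely, `|u_{nm}| ≤ 4π (C¹(n) C⁰(m) + C⁰(n) C¹(m))`, and
`Σ_{n,m} |u_{nm}|² < ∞`; in particular the matrix `(u_{nm})` defines a (Hilbert–Schmidt)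
bounded operator on `ℓ²(ℤ)`. -/
theorem stmt6 (x : ℤ → EuclideanSpace ℝ (Fin 3)) (hx : Function.Injective x)
    (hx0 : x 0 ≠ 0)
    (δ : ℕ → ℝ) (hδ0 : δ 0 = ‖x 0‖)
    (hδ : ∀ p : ℕ, 1 ≤ p → IsLeast
      {d : ℝ | ∃ j k : ℤ, |j| ≤ (p : ℤ) ∧ |k| ≤ (p : ℤ) ∧ j ≠ k ∧ d = ‖x j - x k‖} (δ p))
    (b : ℤ → ℤ → ℂ) (hherm : ∀ m n : ℤ, b m n = starRingEnd ℂ (b n m))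
    (hb1 : Summable fun p : ℤ × ℤ => ‖b p.1 p.2‖)
    (hb2 : Summable fun p : ℤ × ℤ => ‖b p.1 p.2‖ / δ p.2.natAbs)
    (C0 C1 : ℤ → ℝ)
    (hC0 : ∀ m, C0 m = (1 / (4 * Real.pi)) * ∑' j : ℤ, ‖b m j‖)
    (hC1 : ∀ m, C1 m = (1 / (4 * Real.pi)) * ∑' j : ℤ, ‖b m j‖ / δ j.natAbs)
    (ζ : ℂ) (hζ : 0 ≤ ζ.im) :
    (∀ n m : ℤ, Summable fun p : ℤ × ℤ =>
      if p.2 = p.1 then 0 else ‖b n p.1 * greenK ζ (x p.1 - x p.2) * b p.2 m‖) ∧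
    (∀ n m : ℤ, ‖uMat ζ x b n m‖
      ≤ 4 * Real.pi * (C1 n * C0 m + C0 n * C1 m)) ∧
    (Summable fun q : ℤ × ℤ => ‖uMat ζ x b q.1 q.2‖ ^ 2) ∧
    ∃ T : lp (fun _ : ℤ => ℂ) 2 →L[ℂ] lp (fun _ : ℤ => ℂ) 2,
      ∀ n m : ℤ, (T (lp.single 2 m 1) : ∀ _ : ℤ, ℂ) n = uMat ζ x b n m := by
  have hπ : 0 < 4 * Real.pi := by positivity
  have hδpos : ∀ p, 0 < δ p := by
    intro p
    rcases Nat.eq_zero_or_pos p with rfl | hp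
    · rw [hδ0]; exact norm_pos_iff.mpr hx0
    · obtain ⟨j, k, _, _, hjk, h⟩ := (hδ p hp).1
      rw [h]
      exact norm_pos_iff.mpr (sub_ne_zero.mpr (fun h => hjk (hx h)))
  have hbs : ∀ m n, ‖b m n‖ = ‖b n m‖ := by
    intro m n; rw [hherm m n, RCLike.norm_conj]
  have hsA : ∀ n, Summable fun j => ‖b n j‖ := fun n => hb1.prod_factor n
  have hsB : ∀ n, Summable fun j : ℤ => ‖b n j‖ / δ j.natAbs := fun n => hb2.prod_factor n
  set A : ℤ → ℝ := fun n => ∑' j, ‖b n j‖ with hA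
  set B : ℤ → ℝ := fun n => ∑' j : ℤ, ‖b n j‖ / δ j.natAbs with hB
  have hA0 : ∀ n, 0 ≤ A n := fun n => tsum_nonneg fun j => norm_nonneg _
  have hB0 : ∀ n, 0 ≤ B n := fun n => tsum_nonneg fun j =>
    div_nonneg (norm_nonneg _) (hδpos _).le
  have hAs : Summable A := hb1.prod
  have hBs : Summable B := hb2.prod
  have hinv : ∀ j k : ℤ, k ≠ j → 1 / ‖x j - x k‖ ≤ 1 / δ j.natAbs + 1 / δ k.natAbs := by
    intro j k hjk
    have hj := one_div_pos.mpr (hδpos j.natAbs)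
    have hk := one_div_pos.mpr (hδpos k.natAbs)
    rcases le_total j.natAbs k.natAbs with h | h
    · have h1 : δ k.natAbs ≤ ‖x j - x k‖ :=
        (hδ k.natAbs (by omega)).2 ⟨j, k, by have := Int.abs_eq_natAbs j; have := Int.abs_eq_natAbs k; omega, by have := Int.abs_eq_natAbs j; have := Int.abs_eq_natAbs k; omega,
          hjk.symm, rfl⟩
      have := one_div_le_one_div_of_le (hδpos _) h1
      linarith
    · have h1 : δ j.natAbs ≤ ‖x j - x k‖ :=
        (hδ j.natAbs (by omega)).2 ⟨j, k, by have := Int.abs_eq_natAbs j; have := Int.abs_eq_natAbs k; omega, by have := Int.abs_eq_natAbs j; have := Int.abs_eq_natAbs k; omega,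
          hjk.symm, rfl⟩
      have := one_div_le_one_div_of_le (hδpos _) h1
      linarith
  have hg : ∀ v, ‖greenK ζ v‖ ≤ 1 / (4 * Real.pi) * (1 / ‖v‖) := by
    intro v
    have h1 : ‖Complex.exp (Complex.I * ζ * (‖v‖ : ℝ))‖ ≤ 1 := by
      rw [Complex.norm_exp, Real.exp_le_one_iff]
      have : (Complex.I * ζ * (‖v‖ : ℝ)).re = - (ζ.im * ‖v‖) := by simp
      rw [this]
      have := mul_nonneg hζ (norm_nonneg v)
      linarith
    have h2 : ‖((4 * Real.pi * ‖v‖ : ℝ) : ℂ)‖ = 4 * Real.pi * ‖v‖ := by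
      rw [Complex.norm_real, Real.norm_of_nonneg (by positivity)]
    rw [greenK, norm_div, h2, one_div_mul_one_div]
    exact div_le_div_of_nonneg_right h1 (by positivity)
  set G : ℤ → ℤ → ℤ × ℤ → ℝ := fun n m p => 1 / (4 * Real.pi) *
    ((‖b n p.1‖ / δ p.1.natAbs) * ‖b m p.2‖ + ‖b n p.1‖ * (‖b m p.2‖ / δ p.2.natAbs)) with hG
  have hG0 : ∀ n m p, 0 ≤ G n m p := by
    intro n m p
    have := (hδpos p.1.natAbs).le
    have := (hδpos p.2.natAbs).le
    simp only [hG]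
    positivity
  have hGsum : ∀ n m, HasSum (G n m) (1 / (4 * Real.pi) * (B n * A m + A n * B m)) := by
    intro n m
    have e1 : Summable fun p : ℤ × ℤ => (‖b n p.1‖ / δ p.1.natAbs) * ‖b m p.2‖ :=
      (hsB n).mul_of_nonneg (hsA m) (fun j => div_nonneg (norm_nonneg _) (hδpos _).le)
        (fun j => norm_nonneg _)
    have e2 : Summable fun p : ℤ × ℤ => ‖b n p.1‖ * (‖b m p.2‖ / δ p.2.natAbs) :=
      (hsA n).mul_of_nonneg (hsB m) (fun j => norm_nonneg _)
        (fun j => div_nonneg (norm_nonneg _) (hδpos _).le)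
    exact (((hsB n).hasSum.mul (hsA m).hasSum e1).add
      ((hsA n).hasSum.mul (hsB m).hasSum e2)).mul_left _
  have hle : ∀ n m (p : ℤ × ℤ), (if p.2 = p.1 then 0 else
      ‖b n p.1 * greenK ζ (x p.1 - x p.2) * b p.2 m‖) ≤ G n m p := by
    intro n m p
    split_ifs with h
    · exact hG0 n m p
    · rw [norm_mul, norm_mul, hbs p.2 m]
      have h1 : ‖greenK ζ (x p.1 - x p.2)‖ ≤
          1 / (4 * Real.pi) * (1 / δ p.1.natAbs + 1 / δ p.2.natAbs) :=
        (hg _).trans (mul_le_mul_of_nonneg_left (hinv _ _ h) (by positivity))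
      calc _ ≤ ‖b n p.1‖ * (1 / (4 * Real.pi) * (1 / δ p.1.natAbs + 1 / δ p.2.natAbs))
            * ‖b m p.2‖ := by gcongr
        _ = G n m p := by simp only [hG]; ring
  have hnn : ∀ n m (p : ℤ × ℤ), 0 ≤ (if p.2 = p.1 then 0 else
      ‖b n p.1 * greenK ζ (x p.1 - x p.2) * b p.2 m‖) := by
    intro n m p
    split_ifs
    · exact le_rfl
    · exact norm_nonneg _
  have hu : ∀ n m, ‖uMat ζ x b n m‖ ≤ 1 / (4 * Real.pi) * (B n * A m + A n * B m) := by
    intro n m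
    refine tsum_of_norm_bounded (hGsum n m) fun p => ?_
    refine le_trans (le_of_eq ?_) (hle n m p)
    split_ifs <;> simp
  have hFs : Summable fun q : ℤ × ℤ => 1 / (4 * Real.pi) * (B q.1 * A q.2 + A q.1 * B q.2) :=
    ((hBs.mul_of_nonneg hAs hB0 hA0).add (hAs.mul_of_nonneg hBs hA0 hB0)).mul_left _
  have hus : Summable fun q : ℤ × ℤ => ‖uMat ζ x b q.1 q.2‖ :=
    Summable.of_nonneg_of_le (fun q => norm_nonneg _) (fun q => hu q.1 q.2) hFs
  refine ⟨fun n m => Summable.of_nonneg_of_le (hnn n m) (hle n m) (hGsum n m).summable,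
    fun n m => ?_, ?_, ?_⟩
  · refine (hu n m).trans (le_of_eq ?_)
    rw [hC0, hC0, hC1, hC1]
    change _ = 4 * Real.pi * (1 / (4 * Real.pi) * B n * (1 / (4 * Real.pi) * A m) +
      1 / (4 * Real.pi) * A n * (1 / (4 * Real.pi) * B m))
    field_simp
  · refine Summable.of_nonneg_of_le (fun q => sq_nonneg _) (fun q => ?_)
      (hus.mul_left (∑' q : ℤ × ℤ, ‖uMat ζ x b q.1 q.2‖))
    rw [sq]
    exact mul_le_mul_of_nonneg_right (hus.le_tsum q fun _ _ => norm_nonneg _) (norm_nonneg _)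
  · let e : ℤ → lp (fun _ : ℤ => ℂ) 2 := fun n => lp.single 2 n 1
    have he : ∀ n, ‖e n‖ = 1 := fun n => by
      simp only [e]
      rw [lp.norm_single (by norm_num)]; simp
    have hin : ∀ n (f : lp (fun _ : ℤ => ℂ) 2), inner ℂ (e n) f = f n := fun n f => by
      simp only [e]
      rw [lp.inner_single_left]; simp
    let E : ℤ × ℤ → (lp (fun _ : ℤ => ℂ) 2 →L[ℂ] lp (fun _ : ℤ => ℂ) 2) := fun q =>
      (innerSL ℂ (e q.2)).smulRight (e q.1)
    have hE : ∀ q, ‖E q‖ = 1 := fun q => by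
      simp only [E]
      rw [ContinuousLinearMap.norm_smulRight_apply, innerSL_apply_norm, he, he, one_mul]
    have hS : Summable fun q : ℤ × ℤ => uMat ζ x b q.1 q.2 • E q := by
      refine Summable.of_norm ?_
      simpa only [norm_smul, hE, mul_one] using hus
    refine ⟨∑' q : ℤ × ℤ, uMat ζ x b q.1 q.2 • E q, fun n m => ?_⟩
    have h1 := (hS.hasSum.mapL (ContinuousLinearMap.apply ℂ _ (e m))).mapL (innerSL ℂ (e n))
    have h2 := h1.unique (hasSum_single (n, m) ?_)
    · simp only [ContinuousLinearMap.apply_apply, innerSL_apply_apply, hin] at h2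
      change ((∑' q : ℤ × ℤ, uMat ζ x b q.1 q.2 • E q) (e m) : ∀ _ : ℤ, ℂ) n = _
      rw [h2]
      simp [E, e, lp.inner_single_left]
    · rintro ⟨i, j⟩ hij
      simp only [ContinuousLinearMap.apply_apply, innerSL_apply_apply, hin]
      simp only [E, e, ContinuousLinearMap.smul_apply, ContinuousLinearMap.smulRight_apply,
        innerSL_apply_apply]
      by_cases hj : j = m
      · have hi : i ≠ n := fun h => hij (by rw [h, hj])
        simp [lp.single_apply, Pi.single_apply, hi.symm]
      · simp [lp.inner_single_left, lp.single_apply, Pi.single_apply, hj]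
end

section
/- Let z ∈ ℂ with Im z ≠ 0 and let ζ be the square root of z with Im ζ > 0. Let (x_n)_{n∈ℤ} be pairwise distinct points of ℝ³ and let c : ℤ → ℂ satisfy Σ_{n∈ℤ} |c_n| < ∞ and Σ_{m≠n} |c_m|·|c_n|/|x_m − x_n| < ∞. Then the integral on the right-hand side below is finite and (1/Im z) · Im[ (iζ/4π)·Σ_{n∈ℤ} |c_n|² + Σ_{m,n∈ℤ, m≠n} conj(c_m)·c_n·g(ζ; x_m − x_n) ] = (1/(2π)³) · ∫_{ℝ³} |Σ_{n∈ℤ} c_n·e^{−i k·x_n}|² / ((|k|² − Re z)² + (Im z)²) dk; in particular the left-hand side is nonnegative. -/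
open MeasureTheory Complex Real

/-- The "Fourier series" `ĥ(k) = Σ_n c_n e^{-i k·x_n}`. -/
noncomputable def hhat (c : ℤ → ℂ) (x : ℤ → EuclideanSpace ℝ (Fin 3))
    (k : EuclideanSpace ℝ (Fin 3)) : ℂ :=
  ∑' n : ℤ, c n * Complex.exp (-Complex.I * ((inner ℝ k (x n) : ℝ) : ℂ))


namespace Stmt7Aux


/-- radial profile of the imaginary part of the Green kernel -/
noncomputable def fr (ζ : ℂ) (r : ℝ) : ℝ :=
  Real.exp (-ζ.im * r) * Real.sinc (ζ.re * r) * (ζ.re / (4 * π))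

lemma fr_continuous (ζ : ℂ) : Continuous (fr ζ) := by
  unfold fr
  have := Real.continuous_sinc
  fun_prop

lemma fr_bound (ζ : ℂ) (r : ℝ) : |fr ζ r| ≤ |ζ.re / (4 * π)| * Real.exp (-ζ.im * r) := by
  unfold fr
  rw [abs_mul, abs_mul, abs_of_pos (Real.exp_pos _)]
  have := Real.abs_sinc_le_one (ζ.re * r)
  have h1 := Real.exp_pos (-ζ.im * r)
  have h2 := abs_nonneg (ζ.re / (4 * π))
  calc _ ≤ Real.exp (-ζ.im * r) * 1 * |ζ.re / (4 * π)| := by gcongr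
    _ = _ := by ring

lemma fr_eq_im (ζ : ℂ) (ha : ζ.re ≠ 0) {r : ℝ} (hr : 0 < r) :
    fr ζ r = (Complex.exp (Complex.I * ζ * r) / ((4 * π * r : ℝ) : ℂ)).im := by
  rw [Complex.div_ofReal_im, Complex.exp_im]
  unfold fr
  rw [Real.sinc_of_ne_zero (mul_ne_zero ha hr.ne')]
  have h1 : (Complex.I * ζ * r).re = -ζ.im * r := by simp
  have h2 : (Complex.I * ζ * r).im = ζ.re * r := by simp
  rw [h1, h2]
  have := Real.pi_pos
  field_simp

lemma fr_eq (ζ : ℂ) (ha : ζ.re ≠ 0) {r : ℝ} (hr : 0 < r) :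
    (fr ζ r : ℂ) = (Complex.exp (Complex.I * ζ * r) / ((4 * π * r : ℝ) : ℂ)
      - Complex.exp (Complex.I * (-(starRingEnd ℂ ζ)) * r) / ((4 * π * r : ℝ) : ℂ)) /
        (2 * Complex.I) := by
  rw [fr_eq_im ζ ha hr]
  rw [Complex.im_eq_sub_conj]
  congr 2
  rw [map_div₀, ← Complex.exp_conj, Complex.conj_ofReal]
  congr 2
  simp

lemma integral_radial (ζ : ℂ) (hζ : 0 < ζ.im) {x : ℝ} (hx : x ≠ 0) :
    IntegrableOn (fun ρ : ℝ => (ρ : ℂ) * (Complex.exp (Complex.I * ζ * (√(x ^ 2 + ρ ^ 2) : ℝ)) /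
      ((4 * π * √(x ^ 2 + ρ ^ 2) : ℝ) : ℂ))) (Set.Ioi 0) ∧
    ∫ ρ in Set.Ioi (0 : ℝ), (ρ : ℂ) * (Complex.exp (Complex.I * ζ * (√(x ^ 2 + ρ ^ 2) : ℝ)) /
      ((4 * π * √(x ^ 2 + ρ ^ 2) : ℝ) : ℂ)) =
      Complex.I / (4 * π * ζ) * Complex.exp (Complex.I * ζ * (|x| : ℝ)) := by
  have hζ0 : ζ ≠ 0 := by rintro rfl; simp at hζ
  have hpi := Real.pi_pos
  have hpos : ∀ ρ : ℝ, 0 < x ^ 2 + ρ ^ 2 := fun ρ => by positivity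
  have hs : ∀ ρ : ℝ, 0 < √(x ^ 2 + ρ ^ 2) := fun ρ => Real.sqrt_pos.2 (hpos ρ)
  have hle : ∀ ρ : ℝ, 0 ≤ ρ → ρ ≤ √(x ^ 2 + ρ ^ 2) := fun ρ h => by
    apply Real.le_sqrt_of_sq_le; nlinarith [sq_nonneg x]
  have hnorm : ∀ ρ : ℝ, ‖Complex.exp (Complex.I * ζ * (√(x ^ 2 + ρ ^ 2) : ℝ))‖
      = Real.exp (-ζ.im * √(x ^ 2 + ρ ^ 2)) := by
    intro ρ; rw [Complex.norm_exp]; simp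
  have hint : IntegrableOn (fun ρ : ℝ => (ρ : ℂ) * (Complex.exp (Complex.I * ζ * (√(x ^ 2 + ρ ^ 2) : ℝ)) /
      ((4 * π * √(x ^ 2 + ρ ^ 2) : ℝ) : ℂ))) (Set.Ioi 0) := by
    refine Integrable.mono' ((exp_neg_integrableOn_Ioi 0 hζ).const_mul (1 / (4 * π))) ?_ ?_
    · refine Continuous.aestronglyMeasurable ?_
      have : ∀ ρ : ℝ, ((4 * π * √(x ^ 2 + ρ ^ 2) : ℝ) : ℂ) ≠ 0 := by
        intro ρ; have := hs ρ; exact_mod_cast (by positivity)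
      fun_prop (disch := assumption)
    · refine (ae_restrict_iff' measurableSet_Ioi).2 (Filter.Eventually.of_forall fun ρ hρ => ?_)
      have hρ : 0 < ρ := hρ
      rw [norm_mul, norm_div, hnorm, Complex.norm_real, Complex.norm_real, Real.norm_of_nonneg hρ.le,
        Real.norm_of_nonneg (by have := hs ρ; positivity)]
      have h1 : Real.exp (-ζ.im * √(x ^ 2 + ρ ^ 2)) ≤ Real.exp (-ζ.im * ρ) := by
        apply Real.exp_le_exp.2
        nlinarith [hle ρ hρ.le]
      have h2 := hs ρ
      calc ρ * (Real.exp (-ζ.im * √(x ^ 2 + ρ ^ 2)) / (4 * π * √(x ^ 2 + ρ ^ 2)))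
          = (1 / (4 * π)) * (ρ / √(x ^ 2 + ρ ^ 2)) * Real.exp (-ζ.im * √(x ^ 2 + ρ ^ 2)) := by
            field_simp
        _ ≤ (1 / (4 * π)) * 1 * Real.exp (-ζ.im * ρ) := by
            gcongr
            exact (div_le_one h2).2 (hle ρ hρ.le)
        _ = _ := by ring
  refine ⟨hint, ?_⟩
  have key := integral_Ioi_of_hasDerivAt_of_tendsto' (a := (0 : ℝ)) (m := (0 : ℂ))
    (f := fun ρ : ℝ => (1 / (4 * π * (Complex.I * ζ))) *
      Complex.exp (Complex.I * ζ * (√(x ^ 2 + ρ ^ 2) : ℝ))) (fun ρ _ => ?_) hint ?_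
  · rw [key]
    have : √(x ^ 2 + 0 ^ 2) = |x| := by rw [← Real.sqrt_sq_eq_abs]; simp
    rw [this, zero_sub]
    have hpc : (π : ℂ) ≠ 0 := by exact_mod_cast hpi.ne'
    field_simp
    simp
  · have h1 : HasDerivAt (fun ρ : ℝ => x ^ 2 + ρ ^ 2) (2 * ρ) ρ := by
      simpa using (hasDerivAt_pow 2 ρ).const_add (x ^ 2)
    have h2 := (h1.sqrt (hpos ρ).ne').ofReal_comp
    have h3 := ((h2.const_mul (Complex.I * ζ)).cexp).const_mul (1 / (4 * π * (Complex.I * ζ)))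
    refine h3.congr_deriv ?_
    have hpc : (π : ℂ) ≠ 0 := by exact_mod_cast hpi.ne'
    have hsc : ((√(x ^ 2 + ρ ^ 2) : ℝ) : ℂ) ≠ 0 := by exact_mod_cast (hs ρ).ne'
    push_cast
    field_simp
  · rw [tendsto_zero_iff_norm_tendsto_zero]
    have h0 : Filter.Tendsto (fun ρ : ℝ => ‖(1 / (4 * π * (Complex.I * ζ)) : ℂ)‖ * Real.exp (-ζ.im * ρ))
        Filter.atTop (nhds 0) := by
      have := (Real.tendsto_exp_atBot.comp
        ((Filter.tendsto_id (α := ℝ) (x := Filter.atTop)).const_mul_atTop_of_neg (neg_lt_zero.2 hζ))).const_mul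
          ‖(1 / (4 * π * (Complex.I * ζ)) : ℂ)‖
      simpa using this
    refine squeeze_zero' (Filter.Eventually.of_forall fun _ => norm_nonneg _) ?_ h0
    filter_upwards [Filter.eventually_ge_atTop 0] with ρ hρ
    rw [norm_mul, hnorm]
    have h1 : Real.exp (-ζ.im * √(x ^ 2 + ρ ^ 2)) ≤ Real.exp (-ζ.im * ρ) := by
      apply Real.exp_le_exp.2
      nlinarith [hle ρ hρ]
    exact mul_le_mul_of_nonneg_left h1 (norm_nonneg _)

/-- the planar integral of the profile -/
lemma integral_plane (ζ : ℂ) (hζ : 0 < ζ.im) (ha : ζ.re ≠ 0) {x : ℝ} (hx : x ≠ 0) :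
    ∫ p : ℝ × ℝ, (fr ζ (√(x ^ 2 + (p.1 ^ 2 + p.2 ^ 2))) : ℂ) =
      (Complex.I / (2 * ζ) * Complex.exp (Complex.I * ζ * (|x| : ℝ)) -
       Complex.I / (2 * (-(starRingEnd ℂ ζ))) *
        Complex.exp (Complex.I * (-(starRingEnd ℂ ζ)) * (|x| : ℝ))) / (2 * Complex.I) := by
  have hζ' : 0 < (-(starRingEnd ℂ ζ)).im := by simpa using hζ
  obtain ⟨i1, e1⟩ := integral_radial ζ hζ hx
  obtain ⟨i2, e2⟩ := integral_radial _ hζ' hx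
  rw [← integral_comp_polarCoord_symm, polarCoord_target]
  have h1 : ∀ p : ℝ × ℝ, p.1 • (fr ζ (√(x ^ 2 + ((polarCoord.symm p).1 ^ 2 + (polarCoord.symm p).2 ^ 2))) : ℂ)
      = ((p.1 : ℂ) * (fr ζ (√(x ^ 2 + p.1 ^ 2)) : ℂ)) * (fun _ : ℝ => (1 : ℂ)) p.2 := by
    intro p
    have : (polarCoord.symm p).1 ^ 2 + (polarCoord.symm p).2 ^ 2 = p.1 ^ 2 := by
      simp only [polarCoord_symm_apply]
      nlinarith [Real.sin_sq_add_cos_sq p.2]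
    rw [this]; simp
  simp_rw [h1]
  rw [Measure.volume_eq_prod, setIntegral_prod_mul (fun r : ℝ => (r : ℂ) * (fr ζ (√(x ^ 2 + r ^ 2)) : ℂ)) (fun _ : ℝ => (1 : ℂ))]
  have h2 : ∫ r in Set.Ioi (0:ℝ), (r : ℂ) * (fr ζ (√(x ^ 2 + r ^ 2)) : ℂ)
      = (Complex.I / (4 * π * ζ) * Complex.exp (Complex.I * ζ * (|x| : ℝ)) -
       Complex.I / (4 * π * (-(starRingEnd ℂ ζ))) *
        Complex.exp (Complex.I * (-(starRingEnd ℂ ζ)) * (|x| : ℝ))) / (2 * Complex.I) := by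
    rw [← e1, ← e2, ← integral_sub i1 i2, ← integral_div]
    refine setIntegral_congr_fun measurableSet_Ioi fun r hr => ?_
    have : 0 < √(x ^ 2 + r ^ 2) := Real.sqrt_pos.2 (by positivity)
    rw [fr_eq ζ ha this]
    ring
  rw [h2]
  have h3 : ∫ y in Set.Ioo (-π) π, (fun _ : ℝ => (1 : ℂ)) y = 2 * π := by
    simp [Real.pi_pos.le]
    ring
  rw [h3]
  have hpc : (π : ℂ) ≠ 0 := by exact_mod_cast Real.pi_pos.ne'
  have hζ0 : ζ ≠ 0 := by rintro rfl; simp at hζ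
  have hζ0' : (starRingEnd ℂ) ζ ≠ 0 := by simpa using hζ0
  field_simp
  ring

lemma integral_line (ζ : ℂ) (hζ : 0 < ζ.im) (s : ℝ) :
    Integrable (fun t : ℝ => Complex.exp (-Complex.I * s * t) * Complex.exp (Complex.I * ζ * (|t| : ℝ))) ∧
    ∫ t : ℝ, Complex.exp (-Complex.I * s * t) * Complex.exp (Complex.I * ζ * (|t| : ℝ))
      = 2 * ζ * Complex.I / (ζ ^ 2 - s ^ 2) := by
  have r1 : (Complex.I * (ζ - s)).re < 0 := by simpa using hζ
  have r2 : 0 < (-Complex.I * (ζ + s)).re := by simpa using hζ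
  have c1 : Set.EqOn (fun t : ℝ => Complex.exp (-Complex.I * s * t) * Complex.exp (Complex.I * ζ * (|t| : ℝ)))
      (fun t : ℝ => Complex.exp (Complex.I * (ζ - s) * t)) (Set.Ioi 0) := by
    intro t ht
    simp only
    rw [abs_of_pos ht, ← Complex.exp_add]; congr 1; ring
  have c2 : Set.EqOn (fun t : ℝ => Complex.exp (-Complex.I * s * t) * Complex.exp (Complex.I * ζ * (|t| : ℝ)))
      (fun t : ℝ => Complex.exp (-Complex.I * (ζ + s) * t)) (Set.Iic 0) := by
    intro t ht
    simp only
    rw [abs_of_nonpos ht, ← Complex.exp_add]; congr 1; push_cast; ring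
  have i1 := (integrableOn_congr_fun c1 measurableSet_Ioi (μ := volume)).2 (integrableOn_exp_mul_complex_Ioi r1 0)
  have i2 := (integrableOn_congr_fun c2 measurableSet_Iic (μ := volume)).2 (integrableOn_exp_mul_complex_Iic r2 0)
  refine ⟨?_, ?_⟩
  · rw [← integrableOn_univ, ← Set.Iic_union_Ioi (a := (0:ℝ))]
    exact i2.union i1
  · rw [← intervalIntegral.integral_Iic_add_Ioi i2 i1, setIntegral_congr_fun measurableSet_Ioi c1,
      setIntegral_congr_fun measurableSet_Iic c2, integral_exp_mul_complex_Ioi r1,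
      integral_exp_mul_complex_Iic r2]
    have n1 : ζ - s ≠ 0 := by
      intro h; rw [h] at r1; simp at r1
    have n2 : ζ + s ≠ 0 := by
      intro h; rw [h] at r2; simp at r2
    have n3 : ζ ^ 2 - s ^ 2 ≠ 0 := by
      rw [sq_sub_sq]; exact mul_ne_zero n2 n1
    have : ζ ^ 2 - s ^ 2 = (ζ + s) * (ζ - s) := by ring
    rw [this]
    simp only [Complex.ofReal_zero, mul_zero, Complex.exp_zero]
    field_simp
    rw [Complex.I_sq]
    ring

lemma integrable_jap : Integrable (fun v : EuclideanSpace ℝ (Fin 3) => (1 + ‖v‖) ^ (-(4 : ℝ))) := by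
  apply integrable_one_add_norm
  simp; norm_num

lemma jap_eq (r : ℝ) (hr : 0 ≤ r) : (1 + r) ^ (-(4 : ℝ)) = 1 / (1 + r) ^ 4 := by
  rw [Real.rpow_neg (by positivity), one_div]
  norm_cast

lemma integrable_fr (ζ : ℂ) (hζ : 0 < ζ.im) : Integrable (fun v : EuclideanSpace ℝ (Fin 3) => (fr ζ ‖v‖ : ℂ)) := by
  refine Integrable.mono' (integrable_jap.const_mul
    (|ζ.re / (4 * π)| * (24 * Real.exp ζ.im / ζ.im ^ 4))) ?_ ?_
  · have := fr_continuous ζ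
    exact Continuous.aestronglyMeasurable (by fun_prop)
  · refine Filter.Eventually.of_forall fun v => ?_
    rw [Complex.norm_real, Real.norm_eq_abs]
    refine (fr_bound ζ _).trans ?_
    rw [mul_assoc]
    refine mul_le_mul_of_nonneg_left ?_ (abs_nonneg _)
    rw [jap_eq _ (norm_nonneg v)]
    have h := Real.pow_div_factorial_le_exp (ζ.im * (1 + ‖v‖)) (by positivity) 4
    have h2 : Real.exp (ζ.im * (1 + ‖v‖)) = Real.exp ζ.im / Real.exp (-ζ.im * ‖v‖) := by
      rw [← Real.exp_sub]; congr 1; ring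
    rw [h2, le_div_iff₀ (Real.exp_pos _)] at h
    have h3 : ((Nat.factorial 4 : ℕ) : ℝ) = 24 := by norm_num [Nat.factorial]
    rw [h3] at h
    have : (0:ℝ) < (1 + ‖v‖) ^ 4 := by positivity
    rw [div_mul_div_comm, le_div_iff₀ (by positivity)]
    have h4 : (ζ.im * (1 + ‖v‖)) ^ 4 / 24 * Real.exp (-ζ.im * ‖v‖) * 24 =
      Real.exp (-ζ.im * ‖v‖) * (ζ.im ^ 4 * (1 + ‖v‖) ^ 4) := by ring
    linarith

lemma integrable_den (z : ℂ) (hz : z.im ≠ 0) :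
    Integrable (fun k : EuclideanSpace ℝ (Fin 3) => 1 / ((‖k‖ ^ 2 - z.re) ^ 2 + z.im ^ 2)) := by
  have hB : 0 < z.im ^ 2 := by positivity
  have hD : ∀ k : EuclideanSpace ℝ (Fin 3), 0 < (‖k‖ ^ 2 - z.re) ^ 2 + z.im ^ 2 := fun k => by positivity
  refine Integrable.mono' (integrable_jap.const_mul (4 * (2 + 2 * (1 + z.re) ^ 2 / z.im ^ 2))) ?_ ?_
  · refine Continuous.aestronglyMeasurable ?_
    have := fun k => (hD k).ne'
    fun_prop (disch := assumption)
  · refine Filter.Eventually.of_forall fun k => ?_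
    rw [Real.norm_of_nonneg (by have := hD k; positivity), jap_eq _ (norm_nonneg k)]
    have hr := norm_nonneg k
    generalize ‖k‖ = r at *
    rw [mul_one_div, div_le_div_iff₀ (by positivity) (by positivity), one_mul]
    have h1 : (1 + r) ^ 2 ≤ 2 * (1 + r ^ 2) := by nlinarith [sq_nonneg (1 - r)]
    have h2 : (1 + r) ^ 4 ≤ 4 * (1 + r ^ 2) ^ 2 := by
      calc (1 + r) ^ 4 = ((1 + r) ^ 2) ^ 2 := by ring
        _ ≤ (2 * (1 + r ^ 2)) ^ 2 := by gcongr
        _ = _ := by ring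
    have h3 : (1 + r ^ 2) ^ 2 ≤ 2 * (r ^ 2 - z.re) ^ 2 + 2 * (1 + z.re) ^ 2 := by
      nlinarith [sq_nonneg ((r ^ 2 - z.re) - (1 + z.re))]
    have h4 : (2 + 2 * (1 + z.re) ^ 2 / z.im ^ 2) * ((r ^ 2 - z.re) ^ 2 + z.im ^ 2)
      = 2 * (r ^ 2 - z.re) ^ 2 + 2 * (1 + z.re) ^ 2 + (2 * z.im ^ 2 + 2 * (1 + z.re) ^ 2 / z.im ^ 2 * (r ^ 2 - z.re) ^ 2) := by
      field_simp
      ring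
    have h5 : 0 ≤ 2 * z.im ^ 2 + 2 * (1 + z.re) ^ 2 / z.im ^ 2 * (r ^ 2 - z.re) ^ 2 := by positivity
    rw [mul_assoc, h4]
    linarith

/-- splitting off the first coordinate -/
noncomputable def psi : EuclideanSpace ℝ (Fin 3) ≃ᵐ ℝ × (ℝ × ℝ) :=
  ((MeasurableEquiv.toLp 2 (Fin 3 → ℝ)).symm.trans
    (MeasurableEquiv.piFinSuccAbove (fun _ : Fin 3 => ℝ) 0)).trans
    (MeasurableEquiv.prodCongr (MeasurableEquiv.refl ℝ) MeasurableEquiv.finTwoArrow)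

lemma psi_apply (v : EuclideanSpace ℝ (Fin 3)) : psi v = (v 0, (v 1, v 2)) := rfl

lemma psi_mp : MeasurePreserving psi := by
  have h1 := EuclideanSpace.volume_preserving_symm_measurableEquiv_toLp (Fin 3)
  have h2 := volume_preserving_piFinSuccAbove (fun _ : Fin 3 => ℝ) 0
  have h3 : MeasurePreserving (MeasurableEquiv.prodCongr (MeasurableEquiv.refl ℝ)
      (MeasurableEquiv.finTwoArrow (α := ℝ))) :=
    (MeasurePreserving.id (volume : Measure ℝ)).prod (volume_preserving_finTwoArrow ℝ)
  exact h3.comp (h2.comp h1)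

lemma sq_real_facts (z ζ : ℂ) (hζ2 : ζ ^ 2 = z) (hz : z.im ≠ 0) : ζ.re ≠ 0 := by
  rintro h
  apply hz
  rw [← hζ2, sq, Complex.mul_im, h]; ring

lemma den_ne (z : ℂ) (hz : z.im ≠ 0) (s : ℝ) : z - s ^ 2 ≠ 0 := by
  intro h
  apply hz
  have := congrArg Complex.im h
  have h2 : ((s : ℂ) ^ 2).im = 0 := by rw [← Complex.ofReal_pow, Complex.ofReal_im]
  rw [Complex.sub_im, h2] at this
  simpa using this

lemma fourier_axis (z ζ : ℂ) (hz : z.im ≠ 0) (hζ2 : ζ ^ 2 = z) (hζ : 0 < ζ.im) (s : ℝ) :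
    ∫ v : EuclideanSpace ℝ (Fin 3), Complex.exp (-Complex.I * s * (v 0 : ℝ)) * (fr ζ ‖v‖ : ℂ)
      = ((z.im / ((s ^ 2 - z.re) ^ 2 + z.im ^ 2) : ℝ) : ℂ) := by
  have ha := sq_real_facts z ζ hζ2 hz
  let F : ℝ × (ℝ × ℝ) → ℂ := fun q =>
    Complex.exp (-Complex.I * s * (q.1 : ℝ)) * (fr ζ (√(q.1 ^ 2 + (q.2.1 ^ 2 + q.2.2 ^ 2))) : ℂ)
  have hF : ∀ v : EuclideanSpace ℝ (Fin 3), Complex.exp (-Complex.I * s * (v 0 : ℝ)) * (fr ζ ‖v‖ : ℂ) = F (psi v) := by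
    intro v
    simp only [F, psi_apply]
    rw [EuclideanSpace.norm_eq, Fin.sum_univ_three]
    simp [add_assoc]
  have hFi : Integrable F := by
    rw [← psi_mp.integrable_comp_emb psi.measurableEmbedding]
    have : F ∘ psi = fun v : EuclideanSpace ℝ (Fin 3) => Complex.exp (-Complex.I * s * (v 0 : ℝ)) * (fr ζ ‖v‖ : ℂ) := by
      funext v; exact (hF v).symm
    rw [this]
    refine (integrable_fr ζ hζ).bdd_mul (c := 1) (Continuous.aestronglyMeasurable (by fun_prop)) ?_
    refine Filter.Eventually.of_forall fun v => ?_
    rw [Complex.norm_exp]; simp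
  simp_rw [hF]
  rw [psi_mp.integral_comp psi.measurableEmbedding, Measure.volume_eq_prod, integral_prod _ hFi]
  have hζ' : 0 < (-(starRingEnd ℂ ζ)).im := by simpa using hζ
  obtain ⟨i1, e1⟩ := integral_line ζ hζ s
  obtain ⟨i2, e2⟩ := integral_line _ hζ' s
  have hae : ∀ᵐ t : ℝ, ∫ p : ℝ × ℝ, F (t, p) =
      ((Complex.I / (2 * ζ)) * (Complex.exp (-Complex.I * s * t) * Complex.exp (Complex.I * ζ * (|t| : ℝ))) -
       (Complex.I / (2 * (-(starRingEnd ℂ ζ)))) *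
       (Complex.exp (-Complex.I * s * t) * Complex.exp (Complex.I * (-(starRingEnd ℂ ζ)) * (|t| : ℝ)))) / (2 * Complex.I) := by
    have : ∀ᵐ t : ℝ, t ≠ 0 := by
      simp [ae_iff]
    filter_upwards [this] with t ht
    simp only [F]
    rw [integral_const_mul, integral_plane ζ hζ ha ht]
    ring
  rw [integral_congr_ae hae, integral_div, integral_sub (i1.const_mul _) (i2.const_mul _),
    integral_const_mul, integral_const_mul, e1, e2]
  have hζ0 : ζ ≠ 0 := by rintro rfl; simp at hζ
  have hζ0' : (starRingEnd ℂ) ζ ≠ 0 := by simpa using hζ0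
  have hq : (-(starRingEnd ℂ ζ)) ^ 2 = starRingEnd ℂ z := by rw [neg_sq, ← map_pow, hζ2]
  rw [hq, hζ2]
  have d1 := den_ne z hz s
  have d2 := den_ne (starRingEnd ℂ z) (by simpa using hz) s
  have hD : (((s ^ 2 - z.re) ^ 2 + z.im ^ 2 : ℝ) : ℂ) = (z - s ^ 2) * (starRingEnd ℂ z - s ^ 2) := by
    have := Complex.mul_conj (z - s ^ 2)
    rw [map_sub, map_pow, Complex.conj_ofReal] at this
    rw [this, Complex.normSq_apply]
    have h1 : (z - (s:ℂ) ^ 2).re = z.re - s ^ 2 := by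
      rw [← Complex.ofReal_pow, Complex.sub_re, Complex.ofReal_re]
    have h2 : (z - (s:ℂ) ^ 2).im = z.im := by
      rw [← Complex.ofReal_pow, Complex.sub_im, Complex.ofReal_im, sub_zero]
    rw [h1, h2]; congr 1; ring
  rw [Complex.ofReal_div, hD, Complex.im_eq_sub_conj]
  field_simp
  rw [Complex.I_sq]
  ring

lemma fourier_fr (z ζ : ℂ) (hz : z.im ≠ 0) (hζ2 : ζ ^ 2 = z) (hζ : 0 < ζ.im) (k : EuclideanSpace ℝ (Fin 3)) :
    ∫ v : EuclideanSpace ℝ (Fin 3), Complex.exp (-Complex.I * ((inner ℝ v k : ℝ) : ℂ)) * (fr ζ ‖v‖ : ℂ)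
      = ((z.im / ((‖k‖ ^ 2 - z.re) ^ 2 + z.im ^ 2) : ℝ) : ℂ) := by
  rw [← fourier_axis z ζ hz hζ2 hζ]
  let w : EuclideanSpace ℝ (Fin 3) := ‖k‖ • EuclideanSpace.single 0 1
  have hw : ‖w‖ = ‖k‖ := by simp [w, norm_smul]
  let R := (Submodule.span ℝ {w - k})ᗮ.reflection
  have hR : R w = k := Submodule.reflection_sub hw
  rw [← R.measurePreserving.integral_comp R.toHomeomorph.measurableEmbedding]
  congr 1
  funext v
  rw [← hR, R.inner_map_map, R.norm_map, mul_assoc, hR]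
  congr 3
  simp [w, inner_smul_right, EuclideanSpace.inner_single_right]

lemma inverse_fr (z ζ : ℂ) (hz : z.im ≠ 0) (hζ2 : ζ ^ 2 = z) (hζ : 0 < ζ.im) (v : EuclideanSpace ℝ (Fin 3)) :
    ∫ k : EuclideanSpace ℝ (Fin 3), Complex.exp (Complex.I * ((inner ℝ k v : ℝ) : ℂ)) *
      ((1 / ((‖k‖ ^ 2 - z.re) ^ 2 + z.im ^ 2) : ℝ) : ℂ)
      = ((2 * π) ^ 3 / z.im * fr ζ ‖v‖ : ℝ) := by
  have hpi := Real.pi_pos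
  have hF : FourierTransform.fourier (fun v : EuclideanSpace ℝ (Fin 3) => (fr ζ ‖v‖ : ℂ)) =
      fun w : EuclideanSpace ℝ (Fin 3) => ((z.im / ((‖(2 * π) • w‖ ^ 2 - z.re) ^ 2 + z.im ^ 2) : ℝ) : ℂ) := by
    funext w
    rw [Real.fourier_eq', ← fourier_fr z ζ hz hζ2 hζ]
    congr 1; funext v
    rw [smul_eq_mul, inner_smul_right]
    congr 2; push_cast; ring
  have hi : Integrable (fun w : EuclideanSpace ℝ (Fin 3) => ((z.im / ((‖w‖ ^ 2 - z.re) ^ 2 + z.im ^ 2) : ℝ) : ℂ)) := by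
    have h := (integrable_den z hz).const_mul z.im
    simp only [mul_one_div] at h
    exact h.ofReal
  have hc : Continuous (fun v : EuclideanSpace ℝ (Fin 3) => (fr ζ ‖v‖ : ℂ)) := by
    have := fr_continuous ζ
    fun_prop
  have key := congrFun (hc.fourierInv_fourier_eq (integrable_fr ζ hζ)
    (by rw [hF]; exact hi.comp_smul (by positivity))) v
  rw [Real.fourierInv_eq', hF] at key
  have hcomp := Measure.integral_comp_smul (volume : Measure (EuclideanSpace ℝ (Fin 3))) (fun k : EuclideanSpace ℝ (Fin 3) =>
    Complex.exp (Complex.I * ((inner ℝ k v : ℝ) : ℂ)) *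
      ((z.im / ((‖k‖ ^ 2 - z.re) ^ 2 + z.im ^ 2) : ℝ) : ℂ)) (2 * π)
  have h1 : ∀ k : EuclideanSpace ℝ (Fin 3), Complex.exp (((2 * π * inner ℝ k v : ℝ) : ℂ) * Complex.I) •
      ((z.im / ((‖(2 * π) • k‖ ^ 2 - z.re) ^ 2 + z.im ^ 2) : ℝ) : ℂ) =
      Complex.exp (Complex.I * ((inner ℝ ((2 * π) • k) v : ℝ) : ℂ)) *
      ((z.im / ((‖(2 * π) • k‖ ^ 2 - z.re) ^ 2 + z.im ^ 2) : ℝ) : ℂ) := by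
    intro k
    rw [smul_eq_mul, real_inner_smul_left, mul_comm Complex.I]
  simp only [h1] at key
  rw [hcomp] at key
  have h2 : ∀ k : EuclideanSpace ℝ (Fin 3), Complex.exp (Complex.I * ((inner ℝ k v : ℝ) : ℂ)) *
      ((z.im / ((‖k‖ ^ 2 - z.re) ^ 2 + z.im ^ 2) : ℝ) : ℂ) = (z.im : ℂ) *
      (Complex.exp (Complex.I * ((inner ℝ k v : ℝ) : ℂ)) *
      ((1 / ((‖k‖ ^ 2 - z.re) ^ 2 + z.im ^ 2) : ℝ) : ℂ)) := by
    intro k; push_cast; ring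
  simp only [h2] at key
  rw [integral_const_mul] at key
  rw [Complex.ofReal_mul, ← key]
  have hzc : (z.im : ℂ) ≠ 0 := by exact_mod_cast hz
  have hpc : (π : ℂ) ≠ 0 := by exact_mod_cast hpi.ne'
  rw [finrank_euclideanSpace_fin, abs_of_pos (by positivity), Complex.real_smul]
  push_cast
  field_simp

lemma norm_cexp_I (t : ℝ) : ‖Complex.exp (-Complex.I * (t : ℂ))‖ = 1 := by
  rw [Complex.norm_exp]; simp

lemma norm_cexp_I' (t : ℝ) : ‖Complex.exp (Complex.I * (t : ℂ))‖ = 1 := by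
  rw [Complex.norm_exp]; simp

lemma summable_prod_c (c : ℤ → ℂ) (hc : Summable fun n : ℤ => ‖c n‖) :
    Summable fun p : ℤ × ℤ => ‖c p.1‖ * ‖c p.2‖ :=
  hc.mul_of_nonneg hc (fun _ => norm_nonneg _) (fun _ => norm_nonneg _)

lemma hhat_sq (c : ℤ → ℂ) (hc : Summable fun n : ℤ => ‖c n‖) (x : ℤ → EuclideanSpace ℝ (Fin 3)) (k : EuclideanSpace ℝ (Fin 3)) :
    ((‖hhat c x k‖ ^ 2 : ℝ) : ℂ) = ∑' p : ℤ × ℤ, starRingEnd ℂ (c p.1) * c p.2 *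
      Complex.exp (Complex.I * ((inner ℝ k (x p.1 - x p.2) : ℝ) : ℂ)) := by
  have hs : Summable fun n : ℤ => ‖c n * Complex.exp (-Complex.I * ((inner ℝ k (x n) : ℝ) : ℂ))‖ := by
    simpa only [norm_mul, norm_cexp_I, mul_one] using hc
  have hs' : Summable fun n : ℤ =>
      ‖starRingEnd ℂ (c n * Complex.exp (-Complex.I * ((inner ℝ k (x n) : ℝ) : ℂ)))‖ := by
    simpa only [RCLike.norm_conj] using hs
  rw [Complex.ofReal_pow, ← Complex.conj_mul']
  unfold hhat
  rw [Complex.conj_tsum, tsum_mul_tsum_of_summable_norm hs' hs]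
  congr 1; funext p
  rw [map_mul, ← Complex.exp_conj, inner_sub_right]
  rw [mul_mul_mul_comm, ← Complex.exp_add]
  congr 2
  simp
  ring

lemma hhat_continuous (c : ℤ → ℂ) (hc : Summable fun n : ℤ => ‖c n‖) (x : ℤ → EuclideanSpace ℝ (Fin 3)) :
    Continuous (hhat c x) := by
  unfold hhat
  refine continuous_tsum (fun n => by fun_prop) hc (fun n k => ?_)
  rw [norm_mul, norm_cexp_I, mul_one]

lemma hhat_bound (c : ℤ → ℂ) (hc : Summable fun n : ℤ => ‖c n‖) (x : ℤ → EuclideanSpace ℝ (Fin 3)) (k : EuclideanSpace ℝ (Fin 3)) :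
    ‖hhat c x k‖ ≤ ∑' n, ‖c n‖ := by
  unfold hhat
  refine tsum_of_norm_bounded hc.hasSum fun n => ?_
  rw [norm_mul, norm_cexp_I, mul_one]

lemma integrable_main (z : ℂ) (hz : z.im ≠ 0) (c : ℤ → ℂ) (hc : Summable fun n : ℤ => ‖c n‖)
    (x : ℤ → EuclideanSpace ℝ (Fin 3)) :
    Integrable (fun k : EuclideanSpace ℝ (Fin 3) => ‖hhat c x k‖ ^ 2 / ((‖k‖ ^ 2 - z.re) ^ 2 + z.im ^ 2)) := by
  have h := (integrable_den z hz).bdd_mul (f := fun k : EuclideanSpace ℝ (Fin 3) => ‖hhat c x k‖ ^ 2)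
    (c := (∑' n, ‖c n‖) ^ 2)
    (((hhat_continuous c hc x).norm.pow 2).aestronglyMeasurable)
    (Filter.Eventually.of_forall fun k => by
      rw [norm_pow, norm_norm]
      exact pow_le_pow_left₀ (norm_nonneg _) (hhat_bound c hc x k) 2)
  simpa only [mul_one_div] using h

lemma integral_main (z ζ : ℂ) (hz : z.im ≠ 0) (hζ2 : ζ ^ 2 = z) (hζ : 0 < ζ.im)
    (c : ℤ → ℂ) (hc : Summable fun n : ℤ => ‖c n‖) (x : ℤ → EuclideanSpace ℝ (Fin 3)) :
    ((∫ k : EuclideanSpace ℝ (Fin 3), ‖hhat c x k‖ ^ 2 / ((‖k‖ ^ 2 - z.re) ^ 2 + z.im ^ 2) : ℝ) : ℂ) =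
      ∑' p : ℤ × ℤ, starRingEnd ℂ (c p.1) * c p.2 *
        (((2 * π) ^ 3 / z.im * fr ζ ‖x p.1 - x p.2‖ : ℝ) : ℂ) := by
  have hd := integrable_den z hz
  let F : ℤ × ℤ → EuclideanSpace ℝ (Fin 3) → ℂ := fun p k => starRingEnd ℂ (c p.1) * c p.2 *
    (Complex.exp (Complex.I * ((inner ℝ k (x p.1 - x p.2) : ℝ) : ℂ)) *
      ((1 / ((‖k‖ ^ 2 - z.re) ^ 2 + z.im ^ 2) : ℝ) : ℂ))
  have hFi : ∀ p, Integrable (F p) := by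
    intro p
    refine Integrable.const_mul ?_ _
    refine hd.ofReal.bdd_mul (c := 1) (Continuous.aestronglyMeasurable (by fun_prop)) ?_
    exact Filter.Eventually.of_forall fun k => (norm_cexp_I' _).le
  have hn : ∀ p, ∫ k, ‖F p k‖ = (‖c p.1‖ * ‖c p.2‖) *
      ∫ k : EuclideanSpace ℝ (Fin 3), ‖(1 / ((‖k‖ ^ 2 - z.re) ^ 2 + z.im ^ 2) : ℝ)‖ := by
    intro p
    rw [← integral_const_mul]
    congr 1; funext k
    simp only [F]
    rw [norm_mul, norm_mul, norm_mul, norm_cexp_I', RCLike.norm_conj, Complex.norm_real, one_mul]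
  have hsum : Summable fun p => ∫ k, ‖F p k‖ := by
    simp_rw [hn]
    exact (summable_prod_c c hc).mul_right _
  have key := integral_tsum_of_summable_integral_norm hFi hsum
  rw [← integral_complex_ofReal]
  have h1 : ∀ k : EuclideanSpace ℝ (Fin 3), ((‖hhat c x k‖ ^ 2 / ((‖k‖ ^ 2 - z.re) ^ 2 + z.im ^ 2) : ℝ) : ℂ)
      = ∑' p, F p k := by
    intro k
    rw [div_eq_mul_one_div, Complex.ofReal_mul, hhat_sq c hc, ← tsum_mul_right]
    congr 1; funext p
    simp only [F]; ring
  have h2 : ∀ p, ∫ k, F p k = starRingEnd ℂ (c p.1) * c p.2 *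
        (((2 * π) ^ 3 / z.im * fr ζ ‖x p.1 - x p.2‖ : ℝ) : ℂ) := by
    intro p
    rw [← inverse_fr z ζ hz hζ2 hζ, ← integral_const_mul]
  simp_rw [h2] at key
  rw [key]
  refine integral_congr_ae (Filter.Eventually.of_forall fun k => ?_)
  exact h1 k

lemma fr_zero (ζ : ℂ) : fr ζ 0 = ζ.re / (4 * π) := by
  simp [fr]

lemma norm_greenK (ζ : ℂ) (hζ : 0 < ζ.im) (v : EuclideanSpace ℝ (Fin 3)) : ‖greenK ζ v‖ ≤ 1 / (4 * π) * (1 / ‖v‖) := by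
  have hpi := Real.pi_pos
  unfold greenK
  rw [norm_div, Complex.norm_real, Complex.norm_exp, Real.norm_of_nonneg (by positivity),
    one_div_mul_one_div]
  gcongr
  rw [Real.exp_le_one_iff]
  have : (Complex.I * ζ * (‖v‖ : ℝ)).re = -ζ.im * ‖v‖ := by simp
  rw [this]
  nlinarith [norm_nonneg v]

set_option maxHeartbeats 1000000 in
lemma lhs_eq (ζ : ℂ) (ha : ζ.re ≠ 0) (hζ : 0 < ζ.im)
    (x : ℤ → EuclideanSpace ℝ (Fin 3)) (hx : Function.Injective x)
    (c : ℤ → ℂ) (hc : Summable fun n : ℤ => ‖c n‖)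
    (hc2 : Summable fun p : ℤ × ℤ =>
      if p.1 = p.2 then 0 else ‖c p.1‖ * ‖c p.2‖ / ‖x p.1 - x p.2‖) :
    ((((Complex.I * ζ / ((4 * Real.pi : ℝ) : ℂ))
        * ((∑' n : ℤ, ‖c n‖ ^ 2 : ℝ) : ℂ)
      + ∑' p : ℤ × ℤ, if p.1 = p.2 then 0 else
          starRingEnd ℂ (c p.1) * c p.2 * greenK ζ (x p.1 - x p.2)).im : ℝ) : ℂ) =
      ∑' p : ℤ × ℤ, starRingEnd ℂ (c p.1) * c p.2 * (fr ζ ‖x p.1 - x p.2‖ : ℂ) := by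
  have hpi := Real.pi_pos
  set G : ℤ × ℤ → ℂ := fun p => if p.1 = p.2 then 0 else
          starRingEnd ℂ (c p.1) * c p.2 * greenK ζ (x p.1 - x p.2) with hG
  have hGs : Summable G := by
    refine Summable.of_norm_bounded (hc2.mul_left (1 / (4 * π))) fun p => ?_
    simp only [hG]
    split_ifs with h
    · simp
    · rw [norm_mul, norm_mul, RCLike.norm_conj]
      calc _ ≤ ‖c p.1‖ * ‖c p.2‖ * (1 / (4 * π) * (1 / ‖x p.1 - x p.2‖)) := by
            gcongr; exact norm_greenK ζ hζ _
        _ = _ := by ring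
  have hGc : Summable fun p => starRingEnd ℂ (G p) := by
    exact (Complex.hasSum_conj'.2 hGs.hasSum).summable
  have hGc' : Summable fun p : ℤ × ℤ => starRingEnd ℂ (G p.swap) :=
    (Equiv.prodComm ℤ ℤ).summable_iff.2 hGc
  -- the off-diagonal part
  have hoff : (((∑' p, G p).im : ℝ) : ℂ) = ∑' p : ℤ × ℤ, if p.1 = p.2 then 0 else
      starRingEnd ℂ (c p.1) * c p.2 * (fr ζ ‖x p.1 - x p.2‖ : ℂ) := by
    rw [Complex.im_eq_sub_conj, Complex.conj_tsum,
      ← (Equiv.prodComm ℤ ℤ).tsum_eq (fun p => starRingEnd ℂ (G p))]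
    simp only [Equiv.prodComm_apply]
    rw [← hGs.tsum_sub hGc', ← tsum_div_const]
    congr 1; funext p
    by_cases h : p.1 = p.2
    · simp [hG, h]
    · have h' : ¬ p.2 = p.1 := fun e => h e.symm
      simp only [hG, h, h', Prod.fst_swap, Prod.snd_swap, if_false]
      have hv : 0 < ‖x p.1 - x p.2‖ := norm_pos_iff.2 (sub_ne_zero.2 fun e => h (hx e))
      rw [fr_eq_im ζ ha hv, Complex.im_eq_sub_conj]
      have hg : greenK ζ (x p.2 - x p.1) = greenK ζ (x p.1 - x p.2) := by
        unfold greenK; rw [norm_sub_rev]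
      rw [hg, map_mul, map_mul, Complex.conj_conj]
      unfold greenK
      ring
  have hT : Summable fun p : ℤ × ℤ =>
      starRingEnd ℂ (c p.1) * c p.2 * (fr ζ ‖x p.1 - x p.2‖ : ℂ) := by
    refine Summable.of_norm_bounded ((summable_prod_c c hc).mul_right |ζ.re / (4 * π)|) fun p => ?_
    rw [norm_mul, norm_mul, RCLike.norm_conj, Complex.norm_real, Real.norm_eq_abs]
    refine mul_le_mul_of_nonneg_left ?_ (by positivity)
    refine (fr_bound ζ _).trans ?_
    refine mul_le_of_le_one_right (abs_nonneg _) ?_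
    rw [Real.exp_le_one_iff]
    nlinarith [norm_nonneg (x p.1 - x p.2)]
  set T : ℤ × ℤ → ℂ := fun p =>
      starRingEnd ℂ (c p.1) * c p.2 * (fr ζ ‖x p.1 - x p.2‖ : ℂ) with hTdef
  have hdec : ∑' p, T p = (∑' p : ℤ × ℤ, if p.1 = p.2 then T p else 0)
      + ∑' p : ℤ × ℤ, if p.1 = p.2 then 0 else T p := by
    rw [← Summable.tsum_add]
    · congr 1; funext p; split_ifs <;> simp
    · refine Summable.of_norm_bounded hT.norm fun p => ?_
      split_ifs <;> simp
    · refine Summable.of_norm_bounded hT.norm fun p => ?_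
      split_ifs <;> simp
  have hinj : Function.Injective (fun n : ℤ => (n, n)) := fun a b h => (Prod.ext_iff.1 h).1
  have hdiag : (∑' p : ℤ × ℤ, if p.1 = p.2 then T p else 0) =
      ((ζ.re / (4 * π) * ∑' n : ℤ, ‖c n‖ ^ 2 : ℝ) : ℂ) := by
    rw [← hinj.tsum_eq (f := fun p : ℤ × ℤ => if p.1 = p.2 then T p else 0)]
    · rw [← tsum_mul_left, Complex.ofReal_tsum]
      congr 1; funext n
      simp only [hTdef, if_true, sub_self, norm_zero, fr_zero]
      rw [Complex.conj_mul']
      push_cast; ring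
    · intro p hp
      by_cases h : p.1 = p.2
      · exact ⟨p.1, Prod.ext rfl h⟩
      · simp [h] at hp
  rw [hdec, hdiag, ← hoff, Complex.add_im, Complex.im_mul_ofReal, Complex.div_ofReal_im]
  simp

end Stmt7Aux

/-- For nonreal `z` with square root `ζ` (with `Im ζ > 0`), pairwise
distinct points `x_n ∈ ℝ³` and `c : ℤ → ℂ` with `Σ|c_n| < ∞` and
`Σ_{m≠n} |c_m||c_n|/|x_m - x_n| < ∞`, the integral on the right below is finite and
`(1/Im z)·Im[(iζ/4π) Σ|c_n|² + Σ_{m≠n} conj(c_m) c_n g(ζ; x_m - x_n)]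
  = (1/(2π)³) ∫ |Σ c_n e^{-i k·x_n}|² / ((|k|² - Re z)² + (Im z)²) dk`, which is
in particular nonnegative. -/
theorem stmt7 (z ζ : ℂ) (hz : z.im ≠ 0) (hζ2 : ζ ^ 2 = z) (hζ : 0 < ζ.im)
    (x : ℤ → EuclideanSpace ℝ (Fin 3)) (hx : Function.Injective x)
    (c : ℤ → ℂ) (hc : Summable fun n : ℤ => ‖c n‖)
    (hc2 : Summable fun p : ℤ × ℤ =>
      if p.1 = p.2 then 0 else ‖c p.1‖ * ‖c p.2‖ / ‖x p.1 - x p.2‖) :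
    Integrable (fun k : EuclideanSpace ℝ (Fin 3) =>
      ‖hhat c x k‖ ^ 2 / ((‖k‖ ^ 2 - z.re) ^ 2 + z.im ^ 2)) volume ∧
    (1 / z.im) * ((Complex.I * ζ / ((4 * Real.pi : ℝ) : ℂ))
        * ((∑' n : ℤ, ‖c n‖ ^ 2 : ℝ) : ℂ)
      + ∑' p : ℤ × ℤ, if p.1 = p.2 then 0 else
          starRingEnd ℂ (c p.1) * c p.2 * greenK ζ (x p.1 - x p.2)).im
      = (1 / (2 * Real.pi) ^ 3) *
        ∫ k : EuclideanSpace ℝ (Fin 3),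
          ‖hhat c x k‖ ^ 2 / ((‖k‖ ^ 2 - z.re) ^ 2 + z.im ^ 2) ∧
    0 ≤ (1 / z.im) * ((Complex.I * ζ / ((4 * Real.pi : ℝ) : ℂ))
        * ((∑' n : ℤ, ‖c n‖ ^ 2 : ℝ) : ℂ)
      + ∑' p : ℤ × ℤ, if p.1 = p.2 then 0 else
          starRingEnd ℂ (c p.1) * c p.2 * greenK ζ (x p.1 - x p.2)).im := by
  have h1 := Stmt7Aux.integrable_main z hz c hc x
  have h2 := Stmt7Aux.integral_main z ζ hz hζ2 hζ c hc x
  have h3 := Stmt7Aux.lhs_eq ζ (Stmt7Aux.sq_real_facts z ζ hζ2 hz) hζ x hx c hc hc2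
  have hpi := Real.pi_pos
  have h4 : (1 / z.im) * ((Complex.I * ζ / ((4 * Real.pi : ℝ) : ℂ))
        * ((∑' n : ℤ, ‖c n‖ ^ 2 : ℝ) : ℂ)
      + ∑' p : ℤ × ℤ, if p.1 = p.2 then 0 else
          starRingEnd ℂ (c p.1) * c p.2 * greenK ζ (x p.1 - x p.2)).im
      = (1 / (2 * Real.pi) ^ 3) *
        ∫ k : EuclideanSpace ℝ (Fin 3),
          ‖hhat c x k‖ ^ 2 / ((‖k‖ ^ 2 - z.re) ^ 2 + z.im ^ 2) := by
    apply Complex.ofReal_injective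
    rw [Complex.ofReal_mul, h3, Complex.ofReal_mul, h2, ← tsum_mul_left, ← tsum_mul_left]
    congr 1
    funext p
    have hzc : (z.im : ℂ) ≠ 0 := by exact_mod_cast hz
    have hpc : (π : ℂ) ≠ 0 := by exact_mod_cast hpi.ne'
    push_cast
    field_simp
  refine ⟨h1, h4, ?_⟩
  rw [h4]
  refine mul_nonneg (by positivity) (integral_nonneg fun k => ?_)
  positivity
end

section
/- Let ζ ∈ ℂ with Im ζ > 0, let (x_n)_{n∈ℤ} be pairwise distinct points of ℝ³ such that the closure of the set {x_n : n ∈ ℤ} has Lebesgue measure zero, and let c : ℤ → ℂ satisfy Σ_{n∈ℤ} |c_n| < ∞. Let w ∈ L²(ℝ³) and suppose that for almost every x ∈ ℝ³, ∫_{ℝ³} (e^{iζ|x−y|}/(4π|x−y|))·w(y) dy = Σ_{n∈ℤ} c_n · e^{iζ|x−x_n|}/(4π|x−x_n|). Then w = 0 almost everywhere (and consequently the right-hand side vanishes identically). -/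
open MeasureTheory Complex Real

theorem greenK_integrable (ζ : ℂ) (hζ : 0 < ζ.im) : Integrable (greenK ζ) := by
  have h := (integrable_fun_norm_addHaar (volume : Measure (EuclideanSpace ℝ (Fin 3)))
    (f := fun r : ℝ => Complex.exp (Complex.I * ζ * (r : ℝ)) / ((4 * Real.pi * r : ℝ) : ℂ))).2
  apply h
  have hd : Module.finrank ℝ (EuclideanSpace ℝ (Fin 3)) = 3 := by simp
  rw [hd]
  have hre : (Complex.I * ζ).re < 0 := by simp [hζ]
  have h2 : IntegrableOn (fun r : ℝ => (r : ℝ) ^ (1 : ℝ) * Real.exp (-ζ.im * r)) (Set.Ioi 0) :=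
    (integrableOn_rpow_mul_exp_neg_mul_rpow (p := 1) (s := 1) (by norm_num) (by norm_num)
      hζ).congr_fun (fun r _ => by simp) measurableSet_Ioi
  refine Integrable.mono h2 ?_ ?_
  · apply Measurable.aestronglyMeasurable
    fun_prop
  · refine (ae_restrict_iff' measurableSet_Ioi).2 (Filter.Eventually.of_forall fun r hr => ?_)
    have hr : 0 < r := hr
    simp only [norm_smul, norm_div, Complex.norm_exp, Complex.norm_real, norm_mul, Real.norm_eq_abs]
    have e1 : (Complex.I * ζ * (r : ℂ)).re = -ζ.im * r := by simp
    rw [e1, abs_of_pos (Real.exp_pos _)]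
    have : |r ^ (3 - 1)| * (Real.exp (-ζ.im * r) / (|4| * |π| * |r|))
        = (r * Real.exp (-ζ.im * r)) / (4 * π) := by
      rw [abs_of_pos hr, abs_of_pos (by positivity : 0 < r ^ (3 - 1)), abs_of_pos Real.pi_pos]
      norm_num
      field_simp
    rw [this, Real.rpow_one, abs_of_pos hr]
    apply div_le_self (by positivity)
    nlinarith [Real.pi_gt_three]

theorem plane_integral (ζ : ℂ) (hζ : 0 < ζ.im) (z : ℝ) (hz : z ≠ 0) :
    ∫ p : ℝ × ℝ, Complex.exp (Complex.I * ζ * (√(z ^ 2 + p.1 ^ 2 + p.2 ^ 2) : ℝ)) /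
      ((4 * Real.pi * √(z ^ 2 + p.1 ^ 2 + p.2 ^ 2) : ℝ) : ℂ)
      = Complex.I / (2 * ζ) * Complex.exp (Complex.I * ζ * (|z| : ℝ)) := by
  rw [← integral_comp_polarCoord_symm]
  have hζ0 : ζ ≠ 0 := by rintro rfl; simp at hζ
  set F : ℝ → ℂ := fun r => (r : ℂ) * (Complex.exp (Complex.I * ζ * (√(z ^ 2 + r ^ 2) : ℝ)) /
      ((4 * Real.pi * √(z ^ 2 + r ^ 2) : ℝ) : ℂ)) with hF
  have h1 : ∀ p : ℝ × ℝ, (p.1 • (Complex.exp (Complex.I * ζ * (√(z ^ 2 + (polarCoord.symm p).1 ^ 2 + (polarCoord.symm p).2 ^ 2) : ℝ)) /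
      ((4 * Real.pi * √(z ^ 2 + (polarCoord.symm p).1 ^ 2 + (polarCoord.symm p).2 ^ 2) : ℝ) : ℂ)) : ℂ) = F p.1 * 1 := by
    intro p
    have : z ^ 2 + (polarCoord.symm p).1 ^ 2 + (polarCoord.symm p).2 ^ 2 = z ^ 2 + p.1 ^ 2 := by
      simp only [polarCoord_symm_apply]
      linear_combination p.1 ^ 2 * Real.sin_sq_add_cos_sq p.2
    rw [this, hF]
    simp
  simp_rw [h1]
  rw [polarCoord_target, Measure.volume_eq_prod, setIntegral_prod_mul (f := F) (g := fun _ => (1 : ℂ))]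
  have h2 : ∫ r in Set.Ioi (0 : ℝ), F r = Complex.I / (4 * π * ζ) * Complex.exp (Complex.I * ζ * (|z| : ℝ)) := by
    have hpos : ∀ r : ℝ, 0 < z ^ 2 + r ^ 2 := fun r => by positivity
    set P : ℝ → ℂ := fun r => -Complex.I / (4 * π * ζ) * Complex.exp (Complex.I * ζ * (√(z ^ 2 + r ^ 2) : ℝ)) with hP
    have hder : ∀ r : ℝ, HasDerivAt P (F r) r := by
      intro r
      have a1 : HasDerivAt (fun r : ℝ => √(z ^ 2 + r ^ 2)) (r / √(z ^ 2 + r ^ 2)) r := by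
        have a0 : HasDerivAt (fun r : ℝ => z ^ 2 + r ^ 2) (2 * r) r := by
          simpa using (hasDerivAt_pow 2 r).const_add (z ^ 2)
        refine (a0.sqrt (hpos r).ne').congr_deriv ?_
        field_simp
      have a2 := ((a1.ofReal_comp.const_mul (Complex.I * ζ)).cexp).const_mul (-Complex.I / (4 * π * ζ))
      refine a2.congr_deriv ?_
      have hs : ((√(z ^ 2 + r ^ 2) : ℝ) : ℂ) ≠ 0 := by
        exact_mod_cast (Real.sqrt_pos.2 (hpos r)).ne'
      have hpi : (π : ℂ) ≠ 0 := by exact_mod_cast Real.pi_pos.ne'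
      simp only [hF]
      push_cast
      field_simp
      simp
    have hnorm : ∀ r : ℝ, 0 ≤ r → ‖Complex.exp (Complex.I * ζ * (√(z ^ 2 + r ^ 2) : ℝ))‖ ≤ Real.exp (-ζ.im * r) := by
      intro r hr
      rw [Complex.norm_exp]
      apply Real.exp_le_exp.2
      have : r ≤ √(z ^ 2 + r ^ 2) := Real.le_sqrt_of_sq_le (by nlinarith [sq_nonneg z])
      simp
      nlinarith
    have hint : IntegrableOn F (Set.Ioi 0) := by
      have h3 : IntegrableOn (fun r : ℝ => Real.exp (-ζ.im * r)) (Set.Ioi 0) := by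
        exact integrableOn_exp_mul_Ioi (by linarith) 0
      refine Integrable.mono h3 ?_ ?_
      · apply Measurable.aestronglyMeasurable
        fun_prop
      · refine (ae_restrict_iff' measurableSet_Ioi).2 (Filter.Eventually.of_forall fun r hr => ?_)
        have hr : 0 < r := hr
        have hle : r ≤ √(z ^ 2 + r ^ 2) := Real.le_sqrt_of_sq_le (by nlinarith [sq_nonneg z])
        have hn := hnorm r hr.le
        have e : ‖F r‖ = r / (4 * π * √(z ^ 2 + r ^ 2)) * ‖Complex.exp (Complex.I * ζ * (√(z ^ 2 + r ^ 2) : ℝ))‖ := by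
          simp only [hF, norm_mul, norm_div, Complex.norm_real, Real.norm_eq_abs]
          rw [abs_of_pos hr, abs_of_pos Real.pi_pos, abs_of_nonneg (Real.sqrt_nonneg _)]
          norm_num
          ring
        rw [e, Real.norm_eq_abs, abs_of_pos (Real.exp_pos _)]
        refine le_trans (mul_le_of_le_one_left (norm_nonneg _) ?_) hn
        rw [div_le_one (by positivity)]
        nlinarith [Real.pi_gt_three, Real.sqrt_nonneg (z ^ 2 + r ^ 2)]
    have hlim : Filter.Tendsto P Filter.atTop (nhds 0) := by
      rw [show (0 : ℂ) = -Complex.I / (4 * π * ζ) * 0 by simp]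
      apply Filter.Tendsto.const_mul
      apply squeeze_zero_norm' (a := fun r : ℝ => Real.exp (-ζ.im * r))
      · filter_upwards [Filter.eventually_ge_atTop 0] with r hr using hnorm r hr
      · apply Real.tendsto_exp_atBot.comp
        exact Filter.tendsto_id.const_mul_atTop_of_neg (by linarith)
    rw [integral_Ioi_of_hasDerivAt_of_tendsto' (fun r _ => hder r) hint hlim]
    simp [hP, Real.sqrt_sq_eq_abs]
    ring
  rw [h2]
  have hpi : (π : ℂ) ≠ 0 := by exact_mod_cast Real.pi_pos.ne'
  simp
  rw [max_eq_left (by positivity)]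
  push_cast
  field_simp
  ring

theorem line_integral (ζ : ℂ) (hζ : 0 < ζ.im) (k : ℝ) :
    ∫ z : ℝ, Complex.exp (-2 * π * Complex.I * k * z) *
      (Complex.I / (2 * ζ) * Complex.exp (Complex.I * ζ * (|z| : ℝ)))
      = 1 / (4 * π ^ 2 * k ^ 2 - ζ ^ 2) := by
  have hζ0 : ζ ≠ 0 := by rintro rfl; simp at hζ
  have r1 : (Complex.I * (ζ - 2 * π * k)).re < 0 := by simp [hζ]
  have r2 : 0 < (-Complex.I * (ζ + 2 * π * k)).re := by simp [hζ]
  have e1 : ∀ z ∈ Set.Ioi (0 : ℝ), Complex.I / (2 * ζ) * Complex.exp (Complex.I * (ζ - 2 * π * k) * z)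
      = Complex.exp (-2 * π * Complex.I * k * z) *
      (Complex.I / (2 * ζ) * Complex.exp (Complex.I * ζ * (|z| : ℝ))) := by
    intro z hz
    rw [abs_of_pos hz, mul_left_comm, ← Complex.exp_add]
    ring_nf
  have e2 : ∀ z ∈ Set.Iic (0 : ℝ), Complex.I / (2 * ζ) * Complex.exp (-Complex.I * (ζ + 2 * π * k) * z)
      = Complex.exp (-2 * π * Complex.I * k * z) *
      (Complex.I / (2 * ζ) * Complex.exp (Complex.I * ζ * (|z| : ℝ))) := by
    intro z hz
    rw [abs_of_nonpos hz, mul_left_comm, ← Complex.exp_add]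
    push_cast
    ring_nf
  have i1 := ((integrableOn_exp_mul_complex_Ioi r1 0).const_mul (Complex.I / (2 * ζ))).congr
    ((ae_restrict_iff' measurableSet_Ioi).2 (Filter.Eventually.of_forall e1))
  have i2 := ((integrableOn_exp_mul_complex_Iic r2 0).const_mul (Complex.I / (2 * ζ))).congr
    ((ae_restrict_iff' measurableSet_Iic).2 (Filter.Eventually.of_forall e2))
  rw [← intervalIntegral.integral_Iic_add_Ioi (b := 0) i2 i1,
    ← setIntegral_congr_fun measurableSet_Iic e2, ← setIntegral_congr_fun measurableSet_Ioi e1,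
    integral_const_mul, integral_const_mul, integral_exp_mul_complex_Iic r2,
    integral_exp_mul_complex_Ioi r1]
  have n1 : ζ - 2 * π * k ≠ 0 := by
    intro h; rw [h] at r1; simp at r1
  have n2 : ζ + 2 * π * k ≠ 0 := by
    intro h; rw [h] at r2; simp at r2
  have n4 : 4 * (π : ℂ) ^ 2 * k ^ 2 - ζ ^ 2 = -((ζ - 2 * π * k) * (ζ + 2 * π * k)) := by ring
  rw [n4]
  simp
  have hI := Complex.I_ne_zero
  field_simp
  ring_nf
  try simp
  try ring

open scoped FourierTransform RealInnerProductSpace SchwartzMap ContDiff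

theorem greenK_fourier_axis (ζ : ℂ) (hζ : 0 < ζ.im) (k : ℝ) :
    𝓕 (greenK ζ) (EuclideanSpace.single 0 k) = 1 / (4 * π ^ 2 * k ^ 2 - ζ ^ 2) := by
  rw [Real.fourier_eq']
  set e : EuclideanSpace ℝ (Fin 3) ≃ᵐ ℝ × (Fin 2 → ℝ) :=
    ((MeasurableEquiv.toLp 2 (Fin 3 → ℝ)).symm.trans
      (MeasurableEquiv.piFinSuccAbove (fun _ : Fin 3 => ℝ) 0)) with he
  have hemp : MeasurePreserving e volume volume :=
    (volume_preserving_piFinSuccAbove (fun _ : Fin 3 => ℝ) 0).comp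
      (EuclideanSpace.volume_preserving_symm_measurableEquiv_toLp (Fin 3))
  set e' : EuclideanSpace ℝ (Fin 3) ≃ᵐ ℝ × (ℝ × ℝ) :=
    e.trans (MeasurableEquiv.prodCongr (MeasurableEquiv.refl ℝ) MeasurableEquiv.finTwoArrow) with he'
  have hemp' : MeasurePreserving e' volume volume := by
    have h2 := (MeasurePreserving.id (volume : Measure ℝ)).prod (volume_preserving_finTwoArrow ℝ)
    have h3 := MeasurePreserving.comp h2 hemp
    exact h3
  have hev : ∀ v, e' v = (v 0, (v 1, v 2)) := by
    intro v
    rfl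
  set H : ℝ × (ℝ × ℝ) → ℂ := fun q => Complex.exp (-2 * π * Complex.I * k * q.1) *
    (Complex.exp (Complex.I * ζ * (√(q.1 ^ 2 + q.2.1 ^ 2 + q.2.2 ^ 2) : ℝ)) /
      ((4 * Real.pi * √(q.1 ^ 2 + q.2.1 ^ 2 + q.2.2 ^ 2) : ℝ) : ℂ)) with hH
  have hHe : ∀ v, Complex.exp (((-2 * π * ⟪v, EuclideanSpace.single 0 k⟫ : ℝ) : ℂ) * Complex.I) • greenK ζ v
      = H (e' v) := by
    intro v
    rw [hev, hH]
    simp only [greenK, smul_eq_mul]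
    rw [EuclideanSpace.norm_eq, Fin.sum_univ_three]
    simp only [Real.norm_eq_abs, sq_abs]
    congr 2
    rw [EuclideanSpace.inner_single_right]
    simp
    ring
  have hHint : Integrable H := by
    rw [← hemp'.integrable_comp_emb e'.measurableEmbedding]
    have : Integrable (fun v => Complex.exp (((-2 * π * ⟪v, EuclideanSpace.single 0 k⟫ : ℝ) : ℂ) * Complex.I) • greenK ζ v) := by
      have := (Real.fourierIntegral_convergent_iff (μ := volume) (f := greenK ζ)
        (EuclideanSpace.single 0 k)).2 (greenK_integrable ζ hζ)
      simpa only [Circle.smul_def, Real.fourierChar_apply, mul_neg, neg_mul] using this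
    exact this.congr (Filter.Eventually.of_forall hHe)
  simp_rw [hHe]
  rw [hemp'.integral_comp e'.measurableEmbedding H, Measure.volume_eq_prod, integral_prod H hHint,
    ← line_integral ζ hζ k]
  apply integral_congr_ae
  have : ∀ᵐ z : ℝ, z ≠ 0 := by simp [ae_iff]
  filter_upwards [this] with z hz
  rw [hH]
  simp only
  rw [integral_const_mul, plane_integral ζ hζ z hz]

theorem greenK_fourier (ζ : ℂ) (hζ : 0 < ζ.im) (ξ : EuclideanSpace ℝ (Fin 3)) :
    𝓕 (greenK ζ) ξ = 1 / (4 * π ^ 2 * (‖ξ‖ ^ 2 : ℝ) - ζ ^ 2) := by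
  set A := (ℝ ∙ (ξ - EuclideanSpace.single 0 ‖ξ‖))ᗮ.reflection
  have hA : A ξ = EuclideanSpace.single 0 ‖ξ‖ := Submodule.reflection_sub (by simp)
  have h := Real.fourier_comp_linearIsometry A (greenK ζ) ξ
  have hc : greenK ζ ∘ A = greenK ζ := by
    ext v
    simp [greenK]
  rw [hc, hA, greenK_fourier_axis ζ hζ] at h
  rw [h]
  push_cast
  rfl

theorem symbol_ne (ζ : ℂ) (hζ : 0 < ζ.im) (s : ℝ) : (4 * π ^ 2 * (s ^ 2 : ℝ) - ζ ^ 2 : ℂ) ≠ 0 := by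
  intro h
  have : (2 * π * s - ζ) * (2 * π * s + ζ) = 0 := by
    push_cast at h
    linear_combination h
  rcases mul_eq_zero.1 this with h | h
  · have := congrArg Complex.im h
    simp at this; linarith
  · have := congrArg Complex.im h
    simp at this; linarith

theorem exists_resolvent (ζ : ℂ) (hζ : 0 < ζ.im) (φ : 𝓢(EuclideanSpace ℝ (Fin 3), ℂ)) :
    ∃ ψ : 𝓢(EuclideanSpace ℝ (Fin 3), ℂ), ∀ a, ∫ x, greenK ζ (x - a) * ψ x = φ a := by
  set m : EuclideanSpace ℝ (Fin 3) → ℂ := fun ξ => 4 * π ^ 2 * (‖ξ‖ ^ 2 : ℝ) - ζ ^ 2 with hm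
  have hmg : m.HasTemperateGrowth := by
    rw [hm]
    fun_prop
  set Ψ : 𝓢(EuclideanSpace ℝ (Fin 3), ℂ) := SchwartzMap.smulLeftCLM ℂ m (𝓕 φ) with hΨ
  have hΨa : ∀ ξ, Ψ ξ = m ξ * 𝓕 (φ : EuclideanSpace ℝ (Fin 3) → ℂ) ξ := by
    intro ξ
    rw [hΨ, SchwartzMap.smulLeftCLM_apply_apply hmg]
    rfl
  refine ⟨𝓕⁻ Ψ, fun a => ?_⟩
  set h : EuclideanSpace ℝ (Fin 3) → ℂ := fun ξ => 𝐞 (-⟪ξ, a⟫) • Ψ (-ξ) with hh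
  have hhint : Integrable h := by
    have := (Real.fourierIntegral_convergent_iff (μ := volume) (f := fun ξ => Ψ (-ξ)) a).2
      Ψ.integrable.comp_neg
    exact this
  have hFh : ∀ v, 𝓕 h v = (𝓕⁻ Ψ) (v + a) := by
    intro v
    rw [SchwartzMap.fourierInv_coe, Real.fourierInv_eq_fourier_comp_neg, Real.fourier_eq, Real.fourier_eq]
    congr 1
    ext ξ
    rw [hh]
    simp only
    rw [smul_smul, ← AddChar.map_add_eq_mul, inner_add_right, neg_add]
  have hflip := VectorFourier.integral_fourierIntegral_smul_eq_flip (μ := volume) (ν := volume)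
    (L := innerₗ (EuclideanSpace ℝ (Fin 3))) Real.continuous_fourierChar
    (by exact continuous_inner) (greenK_integrable ζ hζ) hhint
  rw [flip_innerₗ] at hflip
  change ∫ ξ, 𝓕 (greenK ζ) ξ • h ξ = ∫ v, greenK ζ v • 𝓕 h v at hflip
  have e1 : ∫ x, greenK ζ (x - a) * (𝓕⁻ Ψ) x = ∫ v, greenK ζ v • 𝓕 h v := by
    rw [← integral_add_right_eq_self _ a]
    simp [hFh]
  rw [e1, ← hflip]
  have e2 : ∀ ξ, 𝓕 (greenK ζ) ξ • h ξ = 𝐞 (-⟪ξ, a⟫) • 𝓕 (φ : EuclideanSpace ℝ (Fin 3) → ℂ) (-ξ) := by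
    intro ξ
    have hne := symbol_ne ζ hζ ‖ξ‖
    rw [greenK_fourier ζ hζ, hh]
    simp only
    rw [hΨa, smul_comm, hm]
    simp only [norm_neg, smul_eq_mul]
    rw [← mul_assoc, one_div, inv_mul_cancel₀ hne, one_mul]
  simp_rw [e2]
  rw [← Real.fourier_eq (fun ξ => 𝓕 (φ : EuclideanSpace ℝ (Fin 3) → ℂ) (-ξ)) a,
    ← Real.fourierInv_eq_fourier_comp_neg, ← SchwartzMap.fourier_coe, ← SchwartzMap.fourierInv_coe]
  simp

theorem greenK_neg (ζ : ℂ) (v : EuclideanSpace ℝ (Fin 3)) : greenK ζ (-v) = greenK ζ v := by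
  simp [greenK]

theorem weak_identity (ζ : ℂ) (hζ : 0 < ζ.im)
    (x : ℤ → EuclideanSpace ℝ (Fin 3))
    (c : ℤ → ℂ) (hc : Summable fun n : ℤ => ‖c n‖)
    (w : Lp ℂ 2 (volume : Measure (EuclideanSpace ℝ (Fin 3))))
    (heq : ∀ᵐ xx : EuclideanSpace ℝ (Fin 3),
      (∫ y : EuclideanSpace ℝ (Fin 3),
          greenK ζ (xx - y) * (w : EuclideanSpace ℝ (Fin 3) → ℂ) y)
        = ∑' n : ℤ, c n * greenK ζ (xx - x n)) (φ : 𝓢(EuclideanSpace ℝ (Fin 3), ℂ)) :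
    ∫ y, φ y * (w : EuclideanSpace ℝ (Fin 3) → ℂ) y = ∑' n, c n * φ (x n) := by
  obtain ⟨ψ, hψ⟩ := exists_resolvent ζ hζ φ
  have hg := greenK_integrable ζ hζ
  have hwm : MemLp (w : EuclideanSpace ℝ (Fin 3) → ℂ) 2 volume := Lp.memLp w
  have hψm : MemLp (ψ : EuclideanSpace ℝ (Fin 3) → ℂ) 2 volume := ψ.memLp 2
  have hw2 : Integrable (fun y => ‖(w : EuclideanSpace ℝ (Fin 3) → ℂ) y‖ ^ 2) := hwm.integrable_norm_pow (by norm_num)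
  have hψ2 : Integrable (fun y => ‖ψ y‖ ^ 2) := hψm.integrable_norm_pow (by norm_num)
  -- the double integrand
  have hD : Integrable (fun p : EuclideanSpace ℝ (Fin 3) × EuclideanSpace ℝ (Fin 3) =>
      ψ p.1 * (greenK ζ (p.1 - p.2) * (w : EuclideanSpace ℝ (Fin 3) → ℂ) p.2)) (volume.prod volume) := by
    have h1 : Integrable (fun p : EuclideanSpace ℝ (Fin 3) × EuclideanSpace ℝ (Fin 3) =>
        ‖(w : EuclideanSpace ℝ (Fin 3) → ℂ) p.2‖ ^ 2 * ‖greenK ζ (p.1 - p.2)‖) (volume.prod volume) :=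
      Integrable.convolution_integrand (ContinuousLinearMap.mul ℝ ℝ) hw2 hg.norm
    have h2 : Integrable (fun p : EuclideanSpace ℝ (Fin 3) × EuclideanSpace ℝ (Fin 3) =>
        ‖ψ p.1‖ ^ 2 * ‖greenK ζ (p.1 - p.2)‖) (volume.prod volume) := by
      have := (Integrable.convolution_integrand (ContinuousLinearMap.mul ℝ ℝ) hψ2 hg.norm).swap
      refine this.congr (Filter.Eventually.of_forall fun p => ?_)
      simp only [Function.comp, Prod.fst_swap, Prod.snd_swap, ContinuousLinearMap.mul_apply']
      rw [← greenK_neg ζ (p.1 - p.2), neg_sub]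
    have h3 := AEStronglyMeasurable.convolution_integrand (ContinuousLinearMap.mul ℝ ℂ)
      hwm.aestronglyMeasurable hg.aestronglyMeasurable
    have h4 : AEStronglyMeasurable (fun p : EuclideanSpace ℝ (Fin 3) × EuclideanSpace ℝ (Fin 3) =>
      ψ p.1 * (greenK ζ (p.1 - p.2) * (w : EuclideanSpace ℝ (Fin 3) → ℂ) p.2)) (volume.prod volume) := by
      refine AEStronglyMeasurable.mul ?_ ?_
      · exact (ψ.continuous.comp continuous_fst).aestronglyMeasurable
      · refine h3.congr (Filter.Eventually.of_forall fun p => ?_)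
        simp [mul_comm]
    refine Integrable.mono' (h1.add h2) h4 (Filter.Eventually.of_forall fun p => ?_)
    simp only [norm_mul, Pi.add_apply]
    nlinarith [mul_nonneg (norm_nonneg (greenK ζ (p.1 - p.2)))
      (add_nonneg (sq_nonneg (‖ψ p.1‖ - ‖(w : EuclideanSpace ℝ (Fin 3) → ℂ) p.2‖))
        (add_nonneg (sq_nonneg ‖ψ p.1‖) (sq_nonneg ‖(w : EuclideanSpace ℝ (Fin 3) → ℂ) p.2‖)))]
  have hL : ∫ a, ψ a * ∫ y, greenK ζ (a - y) * (w : EuclideanSpace ℝ (Fin 3) → ℂ) y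
      = ∫ y, φ y * (w : EuclideanSpace ℝ (Fin 3) → ℂ) y := by
    simp_rw [← integral_const_mul]
    rw [integral_integral_swap hD]
    congr 1
    ext y
    rw [← hψ y, ← integral_mul_const]
    congr 1
    ext a
    ring
  obtain ⟨C, hC⟩ : ∃ C, ∀ y, ‖ψ y‖ ≤ C := by
    obtain ⟨C, hC⟩ := ψ.decay 0 0
    exact ⟨C, fun y => by simpa using hC.2 y⟩
  have hgn : ∀ n, Integrable (fun a => ψ a * (c n * greenK ζ (a - x n))) := by
    intro n
    exact ((hg.comp_sub_right (x n)).const_mul (c n)).bdd_mul ψ.continuous.aestronglyMeasurable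
      (Filter.Eventually.of_forall hC)
  have hsum : Summable fun n => ∫ a, ‖ψ a * (c n * greenK ζ (a - x n))‖ := by
    refine Summable.of_nonneg_of_le (fun n => integral_nonneg fun a => norm_nonneg _) (fun n => ?_)
      (hc.mul_left (C * ∫ a, ‖greenK ζ a‖))
    have : C * (∫ a, ‖greenK ζ a‖) * ‖c n‖ = ∫ a, C * ‖c n‖ * ‖greenK ζ (a - x n)‖ := by
      rw [integral_const_mul, integral_sub_right_eq_self (fun a => ‖greenK ζ a‖)]
      ring
    rw [this]
    refine integral_mono (hgn n).norm ((hg.comp_sub_right (x n)).norm.const_mul _) fun a => ?_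
    simp only [norm_mul]
    rw [← mul_assoc]
    gcongr
    exact hC a
  have hR := integral_tsum_of_summable_integral_norm hgn hsum
  have hR2 : ∫ a, ∑' n, ψ a * (c n * greenK ζ (a - x n)) =
      ∫ a, ψ a * ∫ y, greenK ζ (a - y) * (w : EuclideanSpace ℝ (Fin 3) → ℂ) y := by
    apply integral_congr_ae
    filter_upwards [heq] with a ha
    rw [ha, tsum_mul_left]
  rw [← hL, ← hR2, ← hR]
  congr 1
  ext n
  rw [← hψ (x n), ← integral_const_mul]
  congr 1
  ext a
  ring

/-- Let `Im ζ > 0`, let `x_n ∈ ℝ³` be pairwise distinct points whose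
closure has Lebesgue measure zero, and let `Σ|c_n| < ∞`.  If `w ∈ L²(ℝ³)` satisfies, for
almost every `x`, `∫ (e^{iζ|x-y|}/(4π|x-y|)) w(y) dy = Σ_n c_n e^{iζ|x-x_n|}/(4π|x-x_n|)`,
then `w = 0` almost everywhere, and consequently the right-hand side vanishes identically. -/
theorem stmt12 (ζ : ℂ) (hζ : 0 < ζ.im)
    (x : ℤ → EuclideanSpace ℝ (Fin 3)) (hx : Function.Injective x)
    (hcl : volume (closure (Set.range x)) = 0)
    (c : ℤ → ℂ) (hc : Summable fun n : ℤ => ‖c n‖)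
    (w : Lp ℂ 2 (volume : Measure (EuclideanSpace ℝ (Fin 3))))
    (heq : ∀ᵐ xx : EuclideanSpace ℝ (Fin 3),
      (∫ y : EuclideanSpace ℝ (Fin 3),
          greenK ζ (xx - y) * (w : EuclideanSpace ℝ (Fin 3) → ℂ) y)
        = ∑' n : ℤ, c n * greenK ζ (xx - x n)) :
    (∀ᵐ xx : EuclideanSpace ℝ (Fin 3), (w : EuclideanSpace ℝ (Fin 3) → ℂ) xx = 0) ∧
    ∀ xx : EuclideanSpace ℝ (Fin 3), ∑' n : ℤ, c n * greenK ζ (xx - x n) = 0 := by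
  have hweak : ∀ g : EuclideanSpace ℝ (Fin 3) → ℝ, ContDiff ℝ ∞ g → HasCompactSupport g →
      ∫ y, g y • (w : EuclideanSpace ℝ (Fin 3) → ℂ) y = ∑' n, c n * (g (x n) : ℂ) := by
    intro g hg1 hg2
    have s1 : HasCompactSupport (fun y => (g y : ℂ)) := hg2.comp_left (g := fun r : ℝ => (r : ℂ)) (by simp)
    have s2 : ContDiff ℝ ∞ (fun y => (g y : ℂ)) := Complex.ofRealCLM.contDiff.comp hg1
    have := weak_identity ζ hζ x c hc w heq (s1.toSchwartzMap s2)
    simpa using this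
  have hw0 : ∀ᵐ xx : EuclideanSpace ℝ (Fin 3), (w : EuclideanSpace ℝ (Fin 3) → ℂ) xx = 0 := by
    have h1 : ∀ᵐ xx : EuclideanSpace ℝ (Fin 3), xx ∈ (closure (Set.range x))ᶜ →
        (w : EuclideanSpace ℝ (Fin 3) → ℂ) xx = 0 := by
      refine IsOpen.ae_eq_zero_of_integral_contDiff_smul_eq_zero isClosed_closure.isOpen_compl ?_ ?_
      · exact ((Lp.memLp w).locallyIntegrable (by norm_num)).locallyIntegrableOn _
      · intro g hg1 hg2 hg3
        rw [hweak g hg1 hg2]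
        have : ∀ n, c n * (g (x n) : ℂ) = 0 := by
          intro n
          have : g (x n) = 0 := by
            by_contra hne
            exact hg3 (subset_tsupport g hne) (subset_closure ⟨n, rfl⟩)
          simp [this]
        simp [this]
    have h2 : ∀ᵐ xx : EuclideanSpace ℝ (Fin 3), xx ∈ (closure (Set.range x))ᶜ := by
      rw [ae_iff]
      simpa using hcl
    filter_upwards [h1, h2] with a ha hb using ha hb
  refine ⟨hw0, ?_⟩
  have hc0 : ∀ m, c m = 0 := by
    intro m
    let B : ∀ k : ℕ, ContDiffBump (x m) := fun k =>
      ⟨1 / (k + 1) / 2, 1 / (k + 1), by positivity, by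
        have : (0 : ℝ) < 1 / (k + 1) := by positivity
        linarith⟩
    have hB0 : ∀ k, ∑' n, c n * (B k (x n) : ℂ) = 0 := by
      intro k
      rw [← hweak (B k) (B k).contDiff (B k).hasCompactSupport]
      apply integral_eq_zero_of_ae
      filter_upwards [hw0] with a ha
      simp [ha]
    have hlim : Filter.Tendsto (fun k => ∑' n, c n * (B k (x n) : ℂ)) Filter.atTop
        (nhds (∑' n, if n = m then c m else 0)) := by
      refine tendsto_tsum_of_dominated_convergence hc (fun n => ?_)
        (Filter.Eventually.of_forall fun k n => ?_)
      · by_cases hn : n = m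
        · subst hn
          have : ∀ k, B k (x n) = 1 := fun k => (B k).one_of_mem_closedBall (by
            simp [(B k).rIn_pos.le])
          simp [this]
        · simp only [hn, if_false]
          have hd : 0 < dist (x n) (x m) := dist_pos.2 fun h => hn (hx h)
          have ht := tendsto_one_div_add_atTop_nhds_zero_nat (𝕜 := ℝ)
          refine tendsto_const_nhds.congr' ?_
          filter_upwards [ht.eventually (gt_mem_nhds hd)] with k hk
          rw [(B k).zero_of_le_dist hk.le]
          simp
      · rw [norm_mul, Complex.norm_real, Real.norm_eq_abs, abs_of_nonneg (B k).nonneg]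
        exact mul_le_of_le_one_right (norm_nonneg _) (B k).le_one
    simp only [hB0, tsum_ite_eq] at hlim
    exact (tendsto_nhds_unique hlim tendsto_const_nhds)
  intro xx
  simp [hc0]
end

section
/- Let 𝒩 be a complex Hilbert space, let g_1, …, g_N ∈ 𝒩 (N < ∞) be linearly independent, let Υ = (Υ_{jk})_{j,k=1}^N be the Gram matrix Υ_{jk} = (g_j, g_k), and let Λ be an N×N Hermitian complex matrix such that Λ + iΥ is invertible. Then the bounded operator Ω on 𝒩 defined by Ω h = h − 2i·Σ_{j,k=1}^N ((Λ + iΥ)^{−1})_{jk} · (h, g_j) · g_k is unitary: Ω*Ω = ΩΩ* = I. -/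
open Complex ContinuousLinearMap

/-- Finite rank operator attached to a matrix. -/
noncomputable def rkOp {E : Type*} [NormedAddCommGroup E] [InnerProductSpace ℂ E]
    {N : ℕ} (g : Fin N → E) (A : Matrix (Fin N) (Fin N) ℂ) : E →L[ℂ] E :=
  ∑ j, ∑ k, A j k • (innerSL ℂ (g j)).smulRight (g k)

theorem rkOp_apply {E : Type*} [NormedAddCommGroup E] [InnerProductSpace ℂ E]
    {N : ℕ} (g : Fin N → E) (A : Matrix (Fin N) (Fin N) ℂ) (h : E) :
    rkOp g A h = ∑ j, ∑ k, (A j k * (inner ℂ (g j) h : ℂ)) • g k := by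
  simp [rkOp, smul_smul]

theorem rkOp_add {E : Type*} [NormedAddCommGroup E] [InnerProductSpace ℂ E]
    {N : ℕ} (g : Fin N → E) (A B : Matrix (Fin N) (Fin N) ℂ) :
    rkOp g (A + B) = rkOp g A + rkOp g B := by
  simp [rkOp, add_smul, Finset.sum_add_distrib]

theorem rkOp_smul {E : Type*} [NormedAddCommGroup E] [InnerProductSpace ℂ E]
    {N : ℕ} (g : Fin N → E) (c : ℂ) (A : Matrix (Fin N) (Fin N) ℂ) :
    rkOp g (c • A) = c • rkOp g A := by
  simp [rkOp, Finset.smul_sum, smul_smul]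

theorem rkOp_comp {E : Type*} [NormedAddCommGroup E] [InnerProductSpace ℂ E]
    {N : ℕ} (g : Fin N → E) (Υ : Matrix (Fin N) (Fin N) ℂ)
    (hΥ : ∀ j k, Υ j k = (inner ℂ (g k) (g j) : ℂ)) (A B : Matrix (Fin N) (Fin N) ℂ) :
    rkOp g A * rkOp g B = rkOp g (B * Υ * A) := by
  have hc : ∀ j h, (inner ℂ (g j) (rkOp g B h) : ℂ)
      = ∑ l, (B * Υ) l j * (inner ℂ (g l) h : ℂ) := by
    intro j h
    simp only [rkOp_apply, inner_sum, inner_smul_right, Matrix.mul_apply, hΥ, Finset.sum_mul]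
    refine Finset.sum_congr rfl fun l _ => Finset.sum_congr rfl fun m _ => by ring
  ext h
  rw [mul_apply_eq_comp, rkOp_apply g A, rkOp_apply g (B * Υ * A)]
  refine Finset.sum_comm.trans (Eq.trans ?_ Finset.sum_comm)
  refine Finset.sum_congr rfl fun k _ => ?_
  rw [← Finset.sum_smul, ← Finset.sum_smul]
  congr 1
  simp only [hc, Matrix.mul_apply (M := B * Υ), Finset.mul_sum, Finset.sum_mul]
  rw [Finset.sum_comm]
  refine Finset.sum_congr rfl fun l _ => Finset.sum_congr rfl fun m _ => by ring

theorem rkOp_adjoint {E : Type*} [NormedAddCommGroup E] [InnerProductSpace ℂ E]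
    [CompleteSpace E] {N : ℕ} (g : Fin N → E) (A : Matrix (Fin N) (Fin N) ℂ) :
    adjoint (rkOp g A) = rkOp g A.conjTranspose := by
  symm
  rw [ContinuousLinearMap.eq_adjoint_iff]
  intro x y
  simp only [rkOp_apply, inner_sum, sum_inner, inner_smul_right, inner_smul_left,
    Matrix.conjTranspose_apply, map_mul, inner_conj_symm]
  rw [Finset.sum_comm]
  refine Finset.sum_congr rfl fun l _ => Finset.sum_congr rfl fun m _ => ?_
  simp
  ring

/-- Proposition 3.2 of the paper. Let `g₁, …, g_N` be linearly
independent vectors of a complex Hilbert space `𝒩`, `Υ` the Gram matrix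
`Υ_{jk} = (g_j, g_k)` (inner product linear in the *first* argument, i.e. `⟪g k, g j⟫` in
Mathlib's convention), and `Λ` a Hermitian `N×N` matrix with `Λ + iΥ` invertible.  Then the
bounded operator `Ω h = h - 2i Σ_{j,k} ((Λ + iΥ)⁻¹)_{jk} (h, g_j) g_k` is unitary:
`Ω*Ω = ΩΩ* = I`. -/
theorem stmt15 {𝒩 : Type*} [NormedAddCommGroup 𝒩] [InnerProductSpace ℂ 𝒩]
    [CompleteSpace 𝒩] (N : ℕ) (g : Fin N → 𝒩) (hg : LinearIndependent ℂ g)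
    (Υ : Matrix (Fin N) (Fin N) ℂ) (hΥ : ∀ j k, Υ j k = (inner ℂ (g k) (g j) : ℂ))
    (Λ : Matrix (Fin N) (Fin N) ℂ) (hΛ : Λ.IsHermitian)
    (hinv : IsUnit (Λ + Complex.I • Υ))
    (Ω : 𝒩 →L[ℂ] 𝒩)
    (hΩ : ∀ h : 𝒩, Ω h = h - (2 * Complex.I) •
      ∑ j : Fin N, ∑ k : Fin N,
        ((Λ + Complex.I • Υ)⁻¹ j k * (inner ℂ (g j) h : ℂ)) • g k) :
    adjoint Ω ∘L Ω = 1 ∧ Ω ∘L adjoint Ω = 1 := by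
  have hUH : Υ.conjTranspose = Υ := by
    ext j k
    simp [Matrix.conjTranspose_apply, hΥ]
  obtain ⟨u, hu⟩ := hinv
  set K := Λ + Complex.I • Υ with hK
  have hdet : IsUnit K.det := (Matrix.isUnit_iff_isUnit_det _).1 ⟨u, hu⟩
  have h1 : K⁻¹ * K = 1 := Matrix.nonsing_inv_mul _ hdet
  have h2 : K * K⁻¹ = 1 := Matrix.mul_nonsing_inv _ hdet
  set M := K⁻¹ with hM
  have h1' : K.conjTranspose * M.conjTranspose = 1 := by
    rw [← Matrix.conjTranspose_mul, h1, Matrix.conjTranspose_one]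
  have h2' : M.conjTranspose * K.conjTranspose = 1 := by
    rw [← Matrix.conjTranspose_mul, h2, Matrix.conjTranspose_one]
  have hKK : (2 * Complex.I) • Υ = K - K.conjTranspose := by
    rw [hK, Matrix.conjTranspose_add, Matrix.conjTranspose_smul, hUH, hΛ.eq]
    simp only [Complex.star_def, Complex.conj_I]
    module
  have e1 : (2 * Complex.I) • (M * Υ * M.conjTranspose) = M.conjTranspose - M := by
    rw [← Matrix.smul_mul, ← Matrix.mul_smul, hKK, Matrix.mul_sub, Matrix.sub_mul, h1,
      Matrix.mul_assoc, h1', Matrix.one_mul, Matrix.mul_one]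
  have e2 : (2 * Complex.I) • (M.conjTranspose * Υ * M) = M.conjTranspose - M := by
    rw [← Matrix.smul_mul, ← Matrix.mul_smul, hKK, Matrix.mul_sub, Matrix.sub_mul, h2',
      Matrix.mul_assoc, h2, Matrix.one_mul, Matrix.mul_one]
  have hT : Ω = 1 - (2 * Complex.I) • rkOp g M := by
    ext h
    rw [hΩ]
    simp [rkOp_apply]
  have hTs : adjoint Ω = 1 + (2 * Complex.I) • rkOp g M.conjTranspose := by
    rw [hT, ← rkOp_adjoint, ← ContinuousLinearMap.star_eq_adjoint,
      ← ContinuousLinearMap.star_eq_adjoint, star_sub, star_one, star_smul]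
    simp
  have key : ∀ P : Matrix (Fin N) (Fin N) ℂ,
      (2 * Complex.I) • P = M.conjTranspose - M →
      (2 * Complex.I) • rkOp g P + rkOp g M = rkOp g M.conjTranspose := by
    intro P hP
    rw [← rkOp_smul, ← rkOp_add, hP, sub_add_cancel]
  constructor
  · change adjoint Ω * Ω = 1
    rw [hTs, hT, add_mul, one_mul, mul_sub, mul_one, smul_mul_smul_comm, rkOp_comp g Υ hΥ,
      ← key _ e1]
    module
  · change Ω * adjoint Ω = 1
    rw [hTs, hT, sub_mul, one_mul, mul_add, mul_one, smul_mul_smul_comm, rkOp_comp g Υ hΥ,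
      ← key _ e2]
    module
end

section
/- Let 𝒩 be a complex Hilbert space, let q_1, …, q_N ∈ 𝒩, let Υ = (Υ_{jk})_{j,k=1}^N be the Gram matrix Υ_{jk} = (q_j, q_k), and let Λ be an N×N Hermitian complex matrix such that Λ + iΥ is invertible. Define the bounded operator S on 𝒩 by S h = h − 2i·Σ_{j,k=1}^N ((Λ + iΥ)^{−1})_{jk} · (h, q_j) · q_k. Then for every s ∈ {1, …, N}, S q_s = Σ_{j=1}^N ((Λ − iΥ)·(Λ + iΥ)^{−1})_{sj} · q_j. -/
open Complex ContinuousLinearMap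

/-- Let `q₁, …, q_N` be vectors of a complex Hilbert space `𝒩`, `Υ` their
Gram matrix `Υ_{jk} = (q_j, q_k)` (inner product linear in the *first* argument, i.e.
`⟪q k, q j⟫` in Mathlib's convention), and `Λ` a Hermitian matrix with `Λ + iΥ` invertible.
For the operator `S h = h - 2i Σ_{j,k} ((Λ + iΥ)⁻¹)_{jk} (h, q_j) q_k` one has
`S q_s = Σ_j ((Λ - iΥ)(Λ + iΥ)⁻¹)_{sj} q_j` for every `s`. -/
theorem stmt16 {𝒩 : Type*} [NormedAddCommGroup 𝒩] [InnerProductSpace ℂ 𝒩]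
    [CompleteSpace 𝒩] (N : ℕ) (q : Fin N → 𝒩)
    (Υ : Matrix (Fin N) (Fin N) ℂ) (hΥ : ∀ j k, Υ j k = (inner ℂ (q k) (q j) : ℂ))
    (Λ : Matrix (Fin N) (Fin N) ℂ) (hΛ : Λ.IsHermitian)
    (hinv : IsUnit (Λ + Complex.I • Υ))
    (S : 𝒩 →L[ℂ] 𝒩)
    (hS : ∀ h : 𝒩, S h = h - (2 * Complex.I) •
      ∑ j : Fin N, ∑ k : Fin N,
        ((Λ + Complex.I • Υ)⁻¹ j k * (inner ℂ (q j) h : ℂ)) • q k) :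
    ∀ s : Fin N, S (q s) =
      ∑ j : Fin N, (((Λ - Complex.I • Υ) * (Λ + Complex.I • Υ)⁻¹) s j) • q j := by
  intro s
  have hdet : IsUnit (Λ + Complex.I • Υ).det := (Matrix.isUnit_iff_isUnit_det _).mp hinv
  have hmat : (Λ - Complex.I • Υ) * (Λ + Complex.I • Υ)⁻¹
      = 1 - (2 * Complex.I) • (Υ * (Λ + Complex.I • Υ)⁻¹) := by
    have h1 : Λ - Complex.I • Υ = (Λ + Complex.I • Υ) - (2 * Complex.I) • Υ := by
      rw [mul_smul, two_smul]; abel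
    have h2 := Matrix.mul_nonsing_inv _ hdet
    rw [h1, Matrix.sub_mul, h2, Matrix.smul_mul]
  rw [hS, hmat, Finset.sum_comm]
  simp only [Matrix.sub_apply, Matrix.smul_apply, sub_smul, Finset.sum_sub_distrib]
  congr 1
  · simp [Matrix.one_apply]
  · simp only [smul_assoc, ← Finset.smul_sum, Matrix.mul_apply, Finset.sum_smul, hΥ]
    simp only [mul_comm]
end

section
/- Let 𝒩 be a complex Hilbert space and q_1, …, q_{N+1} ∈ 𝒩. Let Λ₊ be an (N+1)×(N+1) complex matrix that is Hermitian and symmetric, with upper-left N×N block Λ; let Υ₊ be the Gram matrix (Υ₊)_{jk} = (q_j, q_k), assume Υ₊ is symmetric (i.e. (q_j, q_k) = (q_k, q_j) for all j, k), and let Υ be its upper-left N×N block. Assume W := Λ + iΥ and W₊ := Λ₊ + iΥ₊ are invertible. Define bounded operators on 𝒩 by S h = h − 2i·Σ_{j,k=1}^N (W^{−1})_{jk}·(h, q_j)·q_k and S₊ h = h − 2i·Σ_{j,k=1}^{N+1} (W₊^{−1})_{jk}·(h, q_j)·q_k. Let ξ = W₊^{−1} e_{N+1} ∈ ℂ^{N+1}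 (where e_{N+1} is the last standard basis vector), f = Σ_{k=1}^{N+1} ξ_k·q_k, and 𝔡 = det(W₊)/det(W). Then for every h ∈ 𝒩, S₊ h = S h − 2i·𝔡 · (Σ_{j=1}^{N+1} ξ_j·(h, q_j)) · f. -/
open Complex Matrix

lemma block_inv_aux (N : ℕ) (M : Matrix (Fin (N + 1)) (Fin (N + 1)) ℂ)
    (hM : M.transpose = M) (A : Matrix (Fin N) (Fin N) ℂ)
    (hA : A = M.submatrix Fin.castSucc Fin.castSucc)
    (hAu : IsUnit A.det) (hMu : IsUnit M.det) :
    (∀ i, M⁻¹ (Fin.last N) i = M⁻¹ i (Fin.last N)) ∧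
    (M.det / A.det) * M⁻¹ (Fin.last N) (Fin.last N) = 1 ∧
    ∀ i j : Fin N, M⁻¹ i.castSucc j.castSucc = A⁻¹ i j +
      (M.det / A.det) * M⁻¹ i.castSucc (Fin.last N) * M⁻¹ j.castSucc (Fin.last N) := by
  have hsym : ∀ i j, M⁻¹ i j = M⁻¹ j i := by
    intro i j
    have h : (M⁻¹).transpose = M⁻¹ := by rw [Matrix.transpose_nonsing_inv, hM]
    exact congrFun (congrFun h j) i
  have h0 := hAu.ne_zero
  have h1 := hMu.ne_zero
  have hlast : (M.det / A.det) * M⁻¹ (Fin.last N) (Fin.last N) = 1 := by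
    have h2 : M⁻¹ (Fin.last N) (Fin.last N) = A.det / M.det := by
      rw [Matrix.inv_def, Matrix.smul_apply, Matrix.adjugate_fin_succ_eq_det_submatrix,
        Fin.succAbove_last, ← hA, Ring.inverse_eq_inv', smul_eq_mul,
        Even.neg_one_pow ⟨_, rfl⟩]
      field_simp
    rw [h2]
    field_simp
  refine ⟨fun i => hsym _ _, hlast, ?_⟩
  set d := M.det / A.det with hd
  let D : Matrix (Fin N) (Fin N) ℂ := fun i j => M⁻¹ i.castSucc j.castSucc -
      d * M⁻¹ i.castSucc (Fin.last N) * M⁻¹ j.castSucc (Fin.last N)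
  have hDA : D * A = 1 := by
    ext i k
    have hBM : M⁻¹ * M = 1 := Matrix.nonsing_inv_mul _ hMu
    have e1 := congrFun (congrFun hBM i.castSucc) k.castSucc
    have e2 := congrFun (congrFun hBM (Fin.last N)) k.castSucc
    rw [Matrix.mul_apply, Fin.sum_univ_castSucc] at e1 e2
    rw [Matrix.one_apply_ne (Fin.castSucc_lt_last k).ne'] at e2
    have e3 : (1 : Matrix (Fin (N+1)) (Fin (N+1)) ℂ) i.castSucc k.castSucc
        = (1 : Matrix (Fin N) (Fin N) ℂ) i k := by
      simp [Matrix.one_apply]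
    rw [e3] at e1
    have e4 : (D * A) i k = ∑ j : Fin N, M⁻¹ i.castSucc j.castSucc * M j.castSucc k.castSucc
        - d * M⁻¹ i.castSucc (Fin.last N) *
          ∑ j : Fin N, M⁻¹ (Fin.last N) j.castSucc * M j.castSucc k.castSucc := by
      rw [Matrix.mul_apply, Finset.mul_sum, ← Finset.sum_sub_distrib]
      refine Finset.sum_congr rfl fun j _ => ?_
      rw [hsym (Fin.last N), hA]
      simp only [D, Matrix.submatrix_apply]
      ring
    rw [e4]
    linear_combination e1 - d * M⁻¹ i.castSucc (Fin.last N) * e2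
      + M⁻¹ i.castSucc (Fin.last N) * M (Fin.last N) k.castSucc * hlast
  intro i j
  rw [Matrix.inv_eq_left_inv hDA]
  simp only [D]
  ring

/-- Let `q₁, …, q_{N+1}` be vectors of a complex Hilbert space `𝒩`,
`Lam` an `(N+1)×(N+1)` Hermitian and symmetric matrix with upper-left `N×N` block its
`castSucc`-submatrix, `Ups` the Gram matrix `Ups_{jk} = (q_j, q_k)` (inner product linear in
the *first* argument, i.e. `⟪q k, q j⟫` in Mathlib's convention), assumed symmetric.
Assume `W = Λ + iΥ` (the `N×N` blocks) and `W₊ = Λ₊ + iΥ₊` are invertible, and let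
`S h = h - 2i Σ_{j,k ≤ N} (W⁻¹)_{jk} (h, q_j) q_k`,
`S₊ h = h - 2i Σ_{j,k ≤ N+1} (W₊⁻¹)_{jk} (h, q_j) q_k`,
`ξ = W₊⁻¹ e_{N+1}`, `f = Σ_k ξ_k q_k` and `𝔡 = det W₊ / det W`.  Then
`S₊ h = S h - 2i 𝔡 (Σ_j ξ_j (h, q_j)) f` for every `h`. -/
theorem stmt18 {𝒩 : Type*} [NormedAddCommGroup 𝒩] [InnerProductSpace ℂ 𝒩]
    [CompleteSpace 𝒩] (N : ℕ) (q : Fin (N + 1) → 𝒩)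
    (Lam : Matrix (Fin (N + 1)) (Fin (N + 1)) ℂ)
    (hLamH : Lam.IsHermitian) (hLamS : Lam.transpose = Lam)
    (Ups : Matrix (Fin (N + 1)) (Fin (N + 1)) ℂ)
    (hUps : ∀ j k, Ups j k = (inner ℂ (q k) (q j) : ℂ))
    (hUpsS : Ups.transpose = Ups)
    (hW : IsUnit (Lam.submatrix Fin.castSucc Fin.castSucc
      + Complex.I • Ups.submatrix Fin.castSucc Fin.castSucc).det)
    (hWplus : IsUnit (Lam + Complex.I • Ups).det)
    (S Splus : 𝒩 →L[ℂ] 𝒩)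
    (hS : ∀ h : 𝒩, S h = h - (2 * Complex.I) •
      ∑ j : Fin N, ∑ k : Fin N,
        (((Lam.submatrix Fin.castSucc Fin.castSucc
            + Complex.I • Ups.submatrix Fin.castSucc Fin.castSucc)⁻¹ j k)
          * (inner ℂ (q j.castSucc) h : ℂ)) • q k.castSucc)
    (hSplus : ∀ h : 𝒩, Splus h = h - (2 * Complex.I) •
      ∑ j : Fin (N + 1), ∑ k : Fin (N + 1),
        (((Lam + Complex.I • Ups)⁻¹ j k) * (inner ℂ (q j) h : ℂ)) • q k) :
    ∀ h : 𝒩, Splus h = S h -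
      ((2 * Complex.I) *
        ((Lam + Complex.I • Ups).det /
          (Lam.submatrix Fin.castSucc Fin.castSucc
            + Complex.I • Ups.submatrix Fin.castSucc Fin.castSucc).det) *
        ∑ j : Fin (N + 1),
          ((Lam + Complex.I • Ups)⁻¹.mulVec (Pi.single (Fin.last N) 1)) j
            * (inner ℂ (q j) h : ℂ)) •
      (∑ k : Fin (N + 1),
        (((Lam + Complex.I • Ups)⁻¹.mulVec (Pi.single (Fin.last N) 1)) k) • q k) := by
  intro h
  obtain ⟨hs, hl, hb⟩ := block_inv_aux N (Lam + Complex.I • Ups)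
    (by rw [Matrix.transpose_add, Matrix.transpose_smul, hLamS, hUpsS])
    (Lam.submatrix Fin.castSucc Fin.castSucc
            + Complex.I • Ups.submatrix Fin.castSucc Fin.castSucc) (by ext; simp) hW hWplus
  rw [hS, hSplus]
  simp only [Matrix.mulVec_single_one, Matrix.col_apply]
  generalize (Lam.submatrix Fin.castSucc Fin.castSucc
            + Complex.I • Ups.submatrix Fin.castSucc Fin.castSucc) = A at *
  generalize (Lam + Complex.I • Ups) = M at *
  generalize M.det / A.det = d at *
  generalize M⁻¹ = B at *
  have key : ∑ j : Fin (N + 1), ∑ k : Fin (N + 1), (B j k * (inner ℂ (q j) h : ℂ)) • q k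
      = ∑ j : Fin N, ∑ k : Fin N,
          (A⁻¹ j k * (inner ℂ (q j.castSucc) h : ℂ)) • q k.castSucc
        + ∑ j : Fin (N + 1), ∑ k : Fin (N + 1),
          (d * (B j (Fin.last N) * (inner ℂ (q j) h : ℂ)) * B k (Fin.last N)) • q k := by
    have hl' : ∀ k, d * B k (Fin.last N) * B (Fin.last N) (Fin.last N) = B k (Fin.last N) := by
      intro k
      linear_combination B k (Fin.last N) * hl
    have hE : ∀ j k, (B j k * (inner ℂ (q j) h : ℂ)) • q k
        = ((B j k - d * B j (Fin.last N) * B k (Fin.last N)) * (inner ℂ (q j) h : ℂ)) • q k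
        + (d * (B j (Fin.last N) * (inner ℂ (q j) h : ℂ)) * B k (Fin.last N)) • q k := by
      intro j k
      rw [← add_smul]
      congr 1
      ring
    simp only [hE, Finset.sum_add_distrib]
    congr 1
    have z1 : ∀ j, B j (Fin.last N) - d * B j (Fin.last N) * B (Fin.last N) (Fin.last N) = 0 :=
      fun j => by rw [hl', sub_self]
    have z2 : ∀ k, B (Fin.last N) k - d * B (Fin.last N) (Fin.last N) * B k (Fin.last N) = 0 :=
      fun j => by rw [hs]; linear_combination z1 j
    have z3 : ∀ j k : Fin N, B j.castSucc k.castSucc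
        - d * B j.castSucc (Fin.last N) * B k.castSucc (Fin.last N) = A⁻¹ j k :=
      fun j k => by rw [hb]; ring
    simp only [Fin.sum_univ_castSucc (n := N), z1, z2, z3, zero_mul, zero_smul, add_zero,
      Finset.sum_const_zero]
  rw [key, smul_add, ← sub_sub]
  congr 1
  rw [mul_assoc, mul_smul (2 * Complex.I) (d * _), Finset.mul_sum, Finset.sum_smul]
  congr 1
  refine Finset.sum_congr rfl fun j _ => ?_
  rw [Finset.smul_sum]
  refine Finset.sum_congr rfl fun k _ => ?_
  rw [smul_smul]
end
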